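/- Let (X_i)_{i∈ℤ} be a stationary ergodic process over a finite alphabet 𝕏 with entropy rate h. For any ε > 0 and any sequence of sample sizes n(k) ≥ 2^{k(h+ε)}, almost surely liminf_{k→∞} H(k, X_1^{n(k)})/k ≥ h. -/

import Mathlib

open MeasureTheory Filter Real

variable {𝕏 : Type*} [Fintype 𝕏] [Nonempty 𝕏] [DecidableEq 𝕏]
  [MeasurableSpace 𝕏] [MeasurableSingletonClass 𝕏]

/-- The left shift on two-sided sequences: `(shift ω) i = ω (i + 1)`. -/
def shift (ω : ℤ → 𝕏) : ℤ → 𝕏 := fun i => ω (i + 1)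

/-- The block `X_{s+1}^{s+l}` of a sequence `ω`, as a tuple in `𝕏^l`. -/
def blk (s l : ℕ) (ω : ℤ → 𝕏) : Fin l → 𝕏 := fun i => ω ((s : ℤ) + 1 + (i : ℤ))

/-- Shannon entropy (base 2) of a distribution `p` on a finite set:
`H(p) = -∑_{w : p w > 0} p w * log₂ (p w)` (`logb 2 0 = 0`, so zero-mass
points contribute nothing). -/
noncomputable def Hent {A : Type*} [Fintype A] (p : A → ℝ) : ℝ :=
  -∑ w, p w * Real.logb 2 (p w)

/-- Empirical nonoverlapping-block distribution
`p_k(w, x_1^n) = ⌊n/k⌋⁻¹ ∑_{i=1}^{⌊n/k⌋} 1[x_{(i-1)k+1}^{ik} = w]`. -/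
noncomputable def empDist (k n : ℕ) (ω : ℤ → 𝕏) : (Fin k → 𝕏) → ℝ :=
  fun w => (∑ i ∈ Finset.range (n / k), if blk (i * k) k ω = w then (1 : ℝ) else 0) / (n / k : ℕ)

/-- Plug-in estimator `H(k, x_1^n)` of the block entropy. -/
noncomputable def plugIn (k n : ℕ) (ω : ℤ → 𝕏) : ℝ := Hent (empDist k n ω)

/-- True block distribution `p_k(w) = P(X_1^k = w)`. -/
noncomputable def pblock (μ : Measure (ℤ → 𝕏)) (k : ℕ) : (Fin k → 𝕏) → ℝ :=
  fun w => (μ {ω | blk 0 k ω = w}).toReal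

/-- Block entropy `H(k) = H(p_k)`. -/
noncomputable def Hblock (μ : Measure (ℤ → 𝕏)) (k : ℕ) : ℝ := Hent (pblock μ k)

/-- Number `D(k, x_1^n)` of distinct nonoverlapping `k`-blocks in `x_1^n`. -/
noncomputable def Dcount (k n : ℕ) (ω : ℤ → 𝕏) : ℕ :=
  Set.ncard {w : Fin k → 𝕏 | ∃ i < n / k, blk (i * k) k ω = w}

/-- Length bound `K(k, x_1^n)` of the modified `k`-block code:
`K(k,x_1^n) = 2 log₂ k + (n/k)(H(k,x_1^n) + 2) + 3 k log₂|𝕏| (D(k,x_1^n) + 1)`. -/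
noncomputable def Kcode (k n : ℕ) (ω : ℤ → 𝕏) : ℝ :=
  2 * Real.logb 2 k + ((n : ℝ) / k) * (plugIn k n ω + 2)
    + 3 * k * Real.logb 2 (Fintype.card 𝕏) * (Dcount k n ω + 1)

/-- Conditional probability `P(X_1^k = w | ℐ)` given the shift-invariant
σ-algebra `ℐ`, as a function of the sample point. -/
noncomputable def condP (μ : Measure (ℤ → 𝕏)) (k : ℕ) (w : Fin k → 𝕏) : (ℤ → 𝕏) → ℝ :=
  μ[Set.indicator {ω | blk 0 k ω = w} (fun _ => (1 : ℝ)) | MeasurableSpace.invariants shift]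

/-- Conditional block entropy `H(X_1^k | ℐ) = E[-log₂ P(X_1^k = w | ℐ)|_{w = X_1^k}]`. -/
noncomputable def condH (μ : Measure (ℤ → 𝕏)) (k : ℕ) : ℝ :=
  ∫ ω, -Real.logb 2 (condP μ k (blk 0 k ω) ω) ∂μ

/-- `σ(y) = min(2^y, 1)`. -/
noncomputable def sigmaFn (y : ℝ) : ℝ := min ((2 : ℝ) ^ y) 1

/-- Negative part `x⁻ = -x · 1[x < 0]`. -/
noncomputable def nPart (x : ℝ) : ℝ := if x < 0 then -x else 0

/-!
Fix `c < h` and suppose that a fraction `γ` of the `M` sampled `k`-blocks lay in a set of at most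
`2 ^ (k c)` words. Spell out that set in a dictionary, at a cost of order `k 2 ^ (k c)`, which is
negligible against `M k`; code the blocks in the set by their position in the dictionary, and all
others by a Markov approximation of `μ`, which by the ergodic theorem costs about `k h` bits per
block however the blocks are selected. The sample is then described by about `M k h - γ M k (h - c)`
bits. No code almost surely beats the probability of the sample by an exponential factor (Barron's
lemma), and by the Shannon-McMillan-Breiman theorem that probability is at most
`2 ^ (-M k (h - o(1)))`: a contradiction. So almost all empirical mass is carried by words of
empirical frequency at most `2 ^ (-k c)`, and the plug-in entropy is at least `k c (1 - o(1))`.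
-/

section Birkhoff

variable {α : Type*} {T : α → α} {f : α → ℝ}

/-- The maximal function `max_{k ≤ n} S_k f` of the Birkhoff sums of `f`, with `S_0 f = 0`. -/
noncomputable def maxBirkhoffSum (T : α → α) (f : α → ℝ) (n : ℕ) (x : α) : ℝ :=
  partialSups (fun k => birkhoffSum T f k x) n

theorem maxBirkhoffSum_zero (x : α) : maxBirkhoffSum T f 0 x = 0 :=
  (partialSups_bot _).trans (birkhoffSum_zero T f x)

theorem maxBirkhoffSum_succ (n : ℕ) (x : α) :
    maxBirkhoffSum T f (n + 1) x = max 0 (f x + maxBirkhoffSum T f n (T x)) := by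
  simp only [maxBirkhoffSum, ← partialSups_const_add, ← birkhoffSum_succ',
    ← Order.succ_eq_add_one, partialSups_succ']
  rfl

theorem monotone_maxBirkhoffSum (x : α) : Monotone fun n => maxBirkhoffSum T f n x :=
  (partialSups _).monotone

theorem maxBirkhoffSum_nonneg (n : ℕ) (x : α) : 0 ≤ maxBirkhoffSum T f n x :=
  le_partialSups_of_le (fun k => birkhoffSum T f k x) n.zero_le

theorem bddAbove_range_birkhoffSum_map {x : α} :
    BddAbove (Set.range fun n => birkhoffSum T f n (T x)) ↔
      BddAbove (Set.range fun n => birkhoffSum T f n x) := by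
  constructor
  · rintro ⟨b, hb⟩
    refine ⟨max 0 (f x + b), Set.forall_mem_range.2 fun n => ?_⟩
    cases n with
    | zero => simp
    | succ n =>
      rw [birkhoffSum_succ']
      exact (add_le_add_right (hb ⟨n, rfl⟩) _).trans (le_max_right _ _)
  · rintro ⟨b, hb⟩
    refine ⟨b - f x, Set.forall_mem_range.2 fun n => ?_⟩
    rw [le_sub_iff_add_le', ← birkhoffSum_succ']
    exact hb ⟨n + 1, rfl⟩

theorem tendsto_maxBirkhoffSum_succ_sub {x : α}
    (hx : ¬ BddAbove (Set.range fun n => birkhoffSum T f n x)) :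
    Tendsto (fun n => maxBirkhoffSum T f (n + 1) x - maxBirkhoffSum T f n (T x)) atTop
      (nhds (f x)) := by
  have htop : Tendsto (fun n => maxBirkhoffSum T f n (T x)) atTop atTop :=
    tendsto_atTop_atTop_of_monotone' (monotone_maxBirkhoffSum _) <| by
      rwa [← bddAbove_range_birkhoffSum_map, ← bddAbove_range_partialSups] at hx
  refine tendsto_const_nhds.congr' ?_
  filter_upwards [htop.eventually_ge_atTop (-f x)] with n hn
  rw [maxBirkhoffSum_succ, max_eq_right (by linarith), add_sub_cancel_right]

theorem abs_maxBirkhoffSum_succ_sub_le (n : ℕ) (x : α) :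
    |maxBirkhoffSum T f (n + 1) x - maxBirkhoffSum T f n (T x)| ≤ |f x| := by
  have hnonneg := maxBirkhoffSum_nonneg (T := T) (f := f) n (T x)
  rw [maxBirkhoffSum_succ, ← max_sub_sub_right, add_sub_cancel_right, zero_sub]
  grind

variable {mα : MeasurableSpace α} {μ : Measure α}

theorem integral_comp_of_measurePreserving {β : Type*} {mβ : MeasurableSpace β} {ν : Measure β}
    {φ : α → β} {g : β → ℝ} (hφ : MeasurePreserving φ μ ν) (hg : AEStronglyMeasurable g ν) :
    ∫ x, g (φ x) ∂μ = ∫ y, g y ∂ν := by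
  rw [← hφ.map_eq] at hg ⊢
  exact (integral_map hφ.aemeasurable hg).symm

theorem integrable_birkhoffSum (hT : MeasurePreserving T μ μ) (hf : Integrable f μ) (n : ℕ) :
    Integrable (birkhoffSum T f n) μ :=
  integrable_finsetSum _ fun i _ => (hT.iterate i).integrable_comp_of_integrable hf

theorem integrable_maxBirkhoffSum (hT : MeasurePreserving T μ μ) (hf : Integrable f μ) (n : ℕ) :
    Integrable (maxBirkhoffSum T f n) μ := by
  induction n with
  | zero => exact (integrable_zero α ℝ μ).congr (.of_forall fun x => (maxBirkhoffSum_zero x).symm)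
  | succ n ih =>
    rw [funext (maxBirkhoffSum_succ n)]
    exact (integrable_zero _ _ _).sup (hf.add (hT.integrable_comp_of_integrable ih))

/-- Garsia's argument: the increments `F_{n+1} - F_n ∘ T` of the maximal function have nonnegative
integral and converge to `f` where the Birkhoff sums are unbounded. -/
theorem integral_nonneg_of_ae_not_bddAbove_birkhoffSum (hT : MeasurePreserving T μ μ)
    (hf : Integrable f μ)
    (hunb : ∀ᵐ x ∂μ, ¬ BddAbove (Set.range fun n => birkhoffSum T f n x)) :
    0 ≤ ∫ x, f x ∂μ := by
  have hF := integrable_maxBirkhoffSum hT hf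
  have hFT n : Integrable (fun x => maxBirkhoffSum T f n (T x)) μ :=
    hT.integrable_comp_of_integrable (hF n)
  refine ge_of_tendsto' (tendsto_integral_of_dominated_convergence (fun x => |f x|)
    (fun n => ((hF (n + 1)).sub (hFT n)).aestronglyMeasurable) hf.abs
    (fun n => .of_forall (abs_maxBirkhoffSum_succ_sub_le n))
    (hunb.mono fun x => tendsto_maxBirkhoffSum_succ_sub)) fun n => ?_
  rw [integral_sub' (hF (n + 1)) (hFT n), sub_nonneg,
    integral_comp_of_measurePreserving hT (hF n).aestronglyMeasurable]
  exact integral_mono (hF n) (hF (n + 1)) fun x => monotone_maxBirkhoffSum x n.le_succ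

theorem nullMeasurableSet_bddAbove_range {g : ℕ → α → ℝ} (hg : ∀ n, AEMeasurable (g n) μ) :
    NullMeasurableSet {x | BddAbove (Set.range fun n => g n x)} μ := by
  have hset : {x | BddAbove (Set.range fun n => g n x)} = ⋃ N : ℕ, ⋂ n, {x | g n x ≤ N} := by
    ext x
    simp only [Set.mem_ofPred_eq, Set.mem_iUnion, Set.mem_iInter, bddAbove_def,
      Set.forall_mem_range]
    exact ⟨fun ⟨b, hb⟩ => ⟨⌈b⌉₊, fun n => (hb n).trans (Nat.le_ceil b)⟩, fun ⟨N, hN⟩ => ⟨N, hN⟩⟩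
  rw [hset]
  exact .iUnion fun N => .iInter fun n => nullMeasurableSet_le (hg n) aemeasurable_const

theorem ae_bddAbove_birkhoffSum (hT : Ergodic T μ) (hf : Integrable f μ)
    (hneg : ∫ x, f x ∂μ < 0) :
    ∀ᵐ x ∂μ, BddAbove (Set.range fun n => birkhoffSum T f n x) := by
  refine (hT.quasiErgodic.ae_mem_or_ae_notMem₀ (nullMeasurableSet_bddAbove_range fun n =>
    (integrable_birkhoffSum hT.toMeasurePreserving hf n).aemeasurable)
    (.of_eq (Set.ext fun x => bddAbove_range_birkhoffSum_map))).resolve_right fun hunb => ?_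
  exact hneg.not_ge
    (integral_nonneg_of_ae_not_bddAbove_birkhoffSum hT.toMeasurePreserving hf hunb)

theorem birkhoffSum_sub_const (c : ℝ) (n : ℕ) (x : α) :
    birkhoffSum T (fun y => f y - c) n x = birkhoffSum T f n x - n * c := by
  simp [birkhoffSum]

variable [IsProbabilityMeasure μ]

theorem ae_eventually_birkhoffAverage_lt (hT : Ergodic T μ) (hf : Integrable f μ) {c : ℝ}
    (hc : ∫ x, f x ∂μ < c) : ∀ᵐ x ∂μ, ∀ᶠ n in atTop, birkhoffAverage ℝ T f n x < c := by
  obtain ⟨c', hfc', hc'c⟩ := exists_between hc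
  have hneg : ∫ x, (f x - c') ∂μ < 0 := by
    rw [integral_sub hf (integrable_const c')]
    simpa using hfc'
  filter_upwards [ae_bddAbove_birkhoffSum hT (hf.sub (integrable_const c')) hneg] with x ⟨b, hb⟩
  filter_upwards [(tendsto_natCast_atTop_atTop.atTop_mul_const
    (sub_pos.2 hc'c)).eventually_gt_atTop b, eventually_gt_atTop 0] with n hbn hn
  have hsum := (birkhoffSum_sub_const c' n x).symm.trans_le (hb ⟨n, rfl⟩)
  rw [birkhoffAverage, smul_eq_mul, inv_mul_lt_iff₀ (Nat.cast_pos.2 hn)]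
  linarith

theorem ae_tendsto_birkhoffAverage (hT : Ergodic T μ) (hf : Integrable f μ) :
    ∀ᵐ x ∂μ, Tendsto (fun n => birkhoffAverage ℝ T f n x) atTop (nhds (∫ x, f x ∂μ)) := by
  have hupper : ∀ᵐ x ∂μ, ∀ c : ℚ, ∫ x, f x ∂μ < c →
      ∀ᶠ n in atTop, birkhoffAverage ℝ T f n x < c :=
    ae_all_iff.2 fun c => eventually_imp_distrib_left.2 (ae_eventually_birkhoffAverage_lt hT hf)
  have hlower : ∀ᵐ x ∂μ, ∀ c : ℚ, ∫ x, -f x ∂μ < c →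
      ∀ᶠ n in atTop, birkhoffAverage ℝ T (-f) n x < c :=
    ae_all_iff.2 fun c => eventually_imp_distrib_left.2 (ae_eventually_birkhoffAverage_lt hT hf.neg)
  filter_upwards [hupper, hlower] with x hup hlow
  refine tendsto_order.2 ⟨fun a ha => ?_, fun a ha => ?_⟩
  · obtain ⟨c, hfc, hca⟩ := exists_rat_btwn (neg_lt_neg ha)
    rw [← integral_neg] at hfc
    filter_upwards [hlow c hfc] with n hn
    rw [birkhoffAverage_neg] at hn
    exact neg_lt_neg_iff.1 (hn.trans hca)
  · obtain ⟨c, hfc, hca⟩ := exists_rat_btwn ha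
    exact (hup c hfc).mono fun n hn => hn.trans hca

end Birkhoff

section BlockSums

variable {α : Type*} {T : α → α} {f g : α → ℝ} {C : ℝ}

theorem birkhoffSum_mono (hfg : f ≤ g) (n : ℕ) (x : α) :
    birkhoffSum T f n x ≤ birkhoffSum T g n x :=
  Finset.sum_le_sum fun _ _ => hfg _

theorem birkhoffSum_nonneg (hf : 0 ≤ f) (n : ℕ) (x : α) : 0 ≤ birkhoffSum T f n x :=
  Finset.sum_nonneg fun _ _ => hf _

theorem birkhoffSum_const (c : ℝ) (n : ℕ) (x : α) :
    birkhoffSum T (fun _ => c) n x = n * c := by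
  simp [birkhoffSum]

theorem birkhoffSum_mul (f : α → ℝ) (M k : ℕ) (x : α) :
    birkhoffSum T f (M * k) x = ∑ i ∈ Finset.range M, birkhoffSum T f k (T^[i * k] x) := by
  induction M with
  | zero => simp
  | succ M ih => rw [Nat.succ_mul, birkhoffSum_add, ih, Finset.sum_range_succ]

theorem birkhoffSum_birkhoffSum_comm (f : α → ℝ) (m n : ℕ) (x : α) :
    birkhoffSum T (birkhoffSum T f m) n x = birkhoffSum T (birkhoffSum T f n) m x := by
  simp only [birkhoffSum, ← Function.iterate_add_apply]
  rw [Finset.sum_comm]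
  simp only [add_comm]

theorem birkhoffSum_le_birkhoffSum_iterate_add (hf0 : 0 ≤ f) (hfC : ∀ x, f x ≤ C) (k l : ℕ)
    (x : α) : birkhoffSum T f k x ≤ birkhoffSum T f k (T^[l] x) + l * C := by
  have hcomm : birkhoffSum T f k x + birkhoffSum T f l (T^[k] x) =
      birkhoffSum T f l x + birkhoffSum T f k (T^[l] x) := by
    rw [← birkhoffSum_add, ← birkhoffSum_add, add_comm]
  have hl : birkhoffSum T f l x ≤ l * C := (birkhoffSum_mono hfC l x).trans_eq
    (birkhoffSum_const C l x)
  linarith [birkhoffSum_nonneg (T := T) hf0 l (T^[k] x)]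

theorem birkhoffSum_le_birkhoffSum_birkhoffAverage_add (hf0 : 0 ≤ f) (hfC : ∀ x, f x ≤ C)
    {L : ℕ} (hL : 0 < L) (k : ℕ) (x : α) :
    birkhoffSum T f k x ≤ birkhoffSum T (birkhoffAverage ℝ T f L) k x + L * C := by
  have hC : 0 ≤ C := (hf0 x).trans (hfC x)
  have hL' : (0 : ℝ) < L := Nat.cast_pos.2 hL
  have havg : birkhoffSum T (birkhoffAverage ℝ T f L) k x =
      (L : ℝ)⁻¹ * birkhoffSum T (birkhoffSum T f L) k x := by
    simp only [birkhoffSum, birkhoffAverage, smul_eq_mul, Finset.mul_sum]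
  have hsum : L * birkhoffSum T f k x ≤ birkhoffSum T (birkhoffSum T f L) k x + L * (L * C) :=
    calc L * birkhoffSum T f k x = ∑ _l ∈ Finset.range L, birkhoffSum T f k x := by simp
      _ ≤ ∑ l ∈ Finset.range L, (birkhoffSum T f k (T^[l] x) + L * C) :=
          Finset.sum_le_sum fun l hl => (birkhoffSum_le_birkhoffSum_iterate_add hf0 hfC k l x).trans
            (by gcongr; exact (Finset.mem_range.1 hl).le)
      _ = birkhoffSum T (birkhoffSum T f L) k x + L * (L * C) := by
          rw [Finset.sum_add_distrib, birkhoffSum_birkhoffSum_comm]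
          simp [birkhoffSum]
  rw [havg]
  refine le_of_mul_le_mul_left (hsum.trans_eq ?_) hL'
  field_simp

theorem birkhoffSum_le_mul_add_birkhoffSum_abs (hf0 : 0 ≤ f) (hfC : ∀ x, f x ≤ C)
    {L : ℕ} (hL : 0 < L) (c : ℝ) (k : ℕ) (x : α) :
    birkhoffSum T f k x ≤
      k * c + birkhoffSum T (fun y => |birkhoffAverage ℝ T f L y - c|) k x + L * C :=
  calc birkhoffSum T f k x
      ≤ birkhoffSum T (birkhoffAverage ℝ T f L) k x + L * C :=
        birkhoffSum_le_birkhoffSum_birkhoffAverage_add hf0 hfC hL k x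
    _ ≤ birkhoffSum T ((fun _ => c) + fun y => |birkhoffAverage ℝ T f L y - c|) k x + L * C := by
        gcongr
        exact birkhoffSum_mono (fun y => sub_le_iff_le_add'.1 (le_abs_self _)) k x
    _ = _ := by rw [birkhoffSum_add', birkhoffSum_const]

/-- The deviations `|A_L f - c|` over all `M` blocks add up to one Birkhoff sum of length `M k`. -/
theorem sum_birkhoffSum_le (hf0 : 0 ≤ f) (hfC : ∀ x, f x ≤ C) {L : ℕ} (hL : 0 < L) (c : ℝ)
    (k : ℕ) {M : ℕ} (J : Finset (Fin M)) (x : α) :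
    ∑ i ∈ J, birkhoffSum T f k (T^[i * k] x) ≤
      J.card * (k * c) +
        (birkhoffSum T (fun y => |birkhoffAverage ℝ T f L y - c|) (M * k) x + M * (L * C)) := by
  set D := fun y => |birkhoffAverage ℝ T f L y - c|
  have hC : 0 ≤ C := (hf0 x).trans (hfC x)
  have hD k x : 0 ≤ birkhoffSum T D k x := birkhoffSum_nonneg (fun _ => abs_nonneg _) k x
  calc ∑ i ∈ J, birkhoffSum T f k (T^[i * k] x)
      ≤ ∑ i ∈ J, (k * c + (birkhoffSum T D k (T^[i * k] x) + L * C)) :=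
        Finset.sum_le_sum fun i _ => (birkhoffSum_le_mul_add_birkhoffSum_abs hf0 hfC hL c k
          _).trans_eq (add_assoc _ _ _)
    _ = J.card * (k * c) + ∑ i ∈ J, (birkhoffSum T D k (T^[i * k] x) + L * C) := by
        rw [Finset.sum_add_distrib, Finset.sum_const, nsmul_eq_mul]
    _ ≤ J.card * (k * c) + ∑ i : Fin M, (birkhoffSum T D k (T^[i * k] x) + L * C) :=
        add_le_add_right (Finset.sum_le_univ_sum_of_nonneg fun i =>
          add_nonneg (hD _ _) (mul_nonneg L.cast_nonneg hC)) _
    _ = J.card * (k * c) + (birkhoffSum T D (M * k) x + M * (L * C)) := by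
        rw [birkhoffSum_mul, Finset.sum_add_distrib, Finset.sum_range]
        simp

variable {mα : MeasurableSpace α} {μ : Measure α}

theorem integrable_birkhoffAverage (hT : MeasurePreserving T μ μ) (hf : Integrable f μ) (n : ℕ) :
    Integrable (birkhoffAverage ℝ T f n) μ :=
  (integrable_birkhoffSum hT hf n).smul (n : ℝ)⁻¹

variable [IsProbabilityMeasure μ]

theorem tendsto_integral_abs_birkhoffAverage_sub (hT : Ergodic T μ) (hf : Integrable f μ)
    (hfC : ∀ x, |f x| ≤ C) :
    Tendsto (fun L => ∫ x, |birkhoffAverage ℝ T f L x - ∫ y, f y ∂μ| ∂μ) atTop (nhds 0) := by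
  have hC : 0 ≤ C := by
    obtain ⟨x⟩ := nonempty_of_isProbabilityMeasure μ
    exact (abs_nonneg _).trans (hfC x)
  have hint : |∫ y, f y ∂μ| ≤ C := by
    simpa using norm_integral_le_of_norm_le_const (μ := μ) (f := f) (.of_forall hfC)
  have havg L x : |birkhoffAverage ℝ T f L x| ≤ C := by
    rw [birkhoffAverage, smul_eq_mul, abs_mul, abs_inv, Nat.abs_cast]
    refine inv_mul_le_of_le_mul₀ L.cast_nonneg hC ?_
    refine (Finset.abs_sum_le_sum_abs _ _).trans ?_
    exact (birkhoffSum_mono (g := fun _ => C) hfC L x).trans_eq (birkhoffSum_const C L x)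
  rw [← integral_zero α ℝ (μ := μ)]
  refine tendsto_integral_of_dominated_convergence (fun _ => C + C)
    (fun L => ((integrable_birkhoffAverage hT.toMeasurePreserving hf L).sub
      (integrable_const _)).abs.aestronglyMeasurable) (integrable_const _)
    (fun L => .of_forall fun x => ?_) ?_
  · rw [norm_abs_eq_norm]
    exact (abs_sub _ _).trans (add_le_add (havg L x) hint)
  · filter_upwards [ae_tendsto_birkhoffAverage hT hf] with x hx
    simpa using (hx.sub_const (∫ y, f y ∂μ)).abs

theorem ae_eventually_sum_birkhoffSum_le (hT : Ergodic T μ) (hf : Integrable f μ) (hf0 : 0 ≤ f)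
    (hfC : ∀ x, f x ≤ C) {δ : ℝ} (hδ : 0 < δ) :
    ∀ᵐ x ∂μ, ∀ᶠ k in atTop, ∀ M : ℕ, 0 < M → ∀ J : Finset (Fin M),
      ∑ i ∈ J, birkhoffSum T f k (T^[i * k] x) ≤ J.card * (k * ∫ y, f y ∂μ) + M * (k * δ) := by
  set c := ∫ y, f y ∂μ
  have hC : ∀ x, |f x| ≤ C := fun x => (abs_of_nonneg (hf0 x)).trans_le (hfC x)
  obtain ⟨L, hLδ, hL⟩ := (((tendsto_integral_abs_birkhoffAverage_sub hT hf hC).eventually_lt_const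
    (half_pos hδ)).and (eventually_gt_atTop 0)).exists
  set D := fun y => |birkhoffAverage ℝ T f L y - c|
  have hDint : Integrable D μ := ((integrable_birkhoffAverage hT.toMeasurePreserving hf L).sub
    (integrable_const c)).abs
  filter_upwards [ae_eventually_birkhoffAverage_lt hT hDint hLδ] with x hx
  obtain ⟨N, hN⟩ := eventually_atTop.1 hx
  filter_upwards [eventually_ge_atTop N, eventually_gt_atTop 0,
    (tendsto_natCast_atTop_atTop.atTop_mul_const (half_pos hδ)).eventually_ge_atTop (L * C)]
    with k hkN hk hkL M hM J
  have hdev : birkhoffSum T D (M * k) x ≤ M * (k * (δ / 2)) := by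
    have hMk : 0 < M * k := Nat.mul_pos hM hk
    have havg := hN (M * k) (hkN.trans (Nat.le_mul_of_pos_left k hM))
    rw [birkhoffAverage, smul_eq_mul, inv_mul_lt_iff₀ (Nat.cast_pos.2 hMk)] at havg
    exact havg.le.trans_eq (by push_cast; ring)
  calc ∑ i ∈ J, birkhoffSum T f k (T^[i * k] x)
      ≤ J.card * (k * c) + (birkhoffSum T D (M * k) x + M * (L * C)) :=
        sum_birkhoffSum_le hf0 hfC hL c k J x
    _ ≤ J.card * (k * c) + (M * (k * (δ / 2)) + M * (k * (δ / 2))) := by gcongr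
    _ = J.card * (k * c) + M * (k * δ) := by ring

end BlockSums

section FiniteValued

variable {Ω S : Type*} {mΩ : MeasurableSpace Ω} {μ : Measure Ω} [IsProbabilityMeasure μ]

theorem ae_measureReal_preimage_singleton_pos [Finite S] (Φ : Ω → S) :
    ∀ᵐ ω ∂μ, 0 < μ.real (Φ ⁻¹' {Φ ω}) := by
  have hfiber : ∀ x, ∀ᵐ ω ∂μ, Φ ω = x → 0 < μ.real (Φ ⁻¹' {x}) := fun x => by
    rcases eq_or_ne (μ (Φ ⁻¹' {x})) 0 with hx | hx
    · exact (measure_eq_zero_iff_ae_notMem.1 hx).mono fun ω hω h => absurd h hω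
    · exact .of_forall fun _ _ => ENNReal.toReal_pos hx (measure_ne_top _ _)
  exact (ae_all_iff.2 hfiber).mono fun ω hω => hω _ rfl

variable [MeasurableSpace S] [MeasurableSingletonClass S] {Φ : Ω → S}

theorem integrable_comp_of_finite [Finite S] (hΦ : Measurable Φ) (F : S → ℝ) :
    Integrable (fun ω => F (Φ ω)) μ :=
  have := Measure.isProbabilityMeasure_map (μ := μ) hΦ.aemeasurable
  (Integrable.of_finite : Integrable F (μ.map Φ)).comp_measurable hΦ

theorem integral_comp_fintype [Fintype S] (hΦ : Measurable Φ) (F : S → ℝ) :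
    ∫ ω, F (Φ ω) ∂μ = ∑ x, μ.real (Φ ⁻¹' {x}) * F x := by
  have := Measure.isProbabilityMeasure_map (μ := μ) hΦ.aemeasurable
  rw [← integral_map hΦ.aemeasurable (measurable_of_finite F).aestronglyMeasurable,
    integral_fintype .of_finite]
  simp only [smul_eq_mul, map_measureReal_apply hΦ (measurableSet_singleton _)]

theorem sum_measureReal_preimage_singleton_of_injective {S' : Type*} [Fintype S']
    (hΦ : Measurable Φ) {e : S' → S} (he : Function.Injective e) :
    ∑ b, μ.real (Φ ⁻¹' {e b}) = μ.real (Φ ⁻¹' Set.range e) := by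
  rw [← measureReal_iUnion_fintype
    (fun a b hab => (Set.disjoint_singleton.2 (he.ne hab)).preimage Φ)
    fun b => hΦ (measurableSet_singleton _), ← Set.preimage_iUnion, Set.iUnion_singleton_eq_range]

theorem setIntegral_comp_fintype [Fintype S] (hΦ : Measurable Φ) (s : Set S) (F : S → ℝ) :
    ∫ ω in Φ ⁻¹' s, F (Φ ω) ∂μ = ∑ x, μ.real (Φ ⁻¹' {x}) * s.indicator F x := by
  rw [← integral_comp_fintype hΦ, ← integral_indicator (hΦ s.toFinite.measurableSet)]
  rfl

end FiniteValued

theorem mul_div_le_of_nonneg (a : ℝ) {b : ℝ} (hb : 0 ≤ b) : a * (b / a) ≤ b := by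
  rw [mul_div_left_comm]
  exact mul_le_of_le_one_right hb (div_self_le_one a)

section BorelCantelli

variable {Ω : Type*} {mΩ : MeasurableSpace Ω} {μ : Measure Ω}

theorem ae_eventually_lt_pow_of_lintegral_le_one {f : ℕ → Ω → ℝ} (hf : ∀ n, AEMeasurable (f n) μ)
    (hint : ∀ n, ∫⁻ ω, ENNReal.ofReal (f n ω) ∂μ ≤ 1) {r : ℝ} (hr : 1 < r) :
    ∀ᵐ ω ∂μ, ∀ᶠ n in atTop, f n ω < r ^ n := by
  have hr0 : 0 < r := one_pos.trans hr
  have hmarkov n : μ {ω | r ^ n ≤ f n ω} ≤ (ENNReal.ofReal r)⁻¹ ^ n :=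
    calc μ {ω | r ^ n ≤ f n ω} ≤ μ {ω | ENNReal.ofReal r ^ n ≤ ENNReal.ofReal (f n ω)} :=
          measure_mono fun ω hω => by
            rw [Set.mem_ofPred_eq, ← ENNReal.ofReal_pow hr0.le]
            exact ENNReal.ofReal_le_ofReal hω
      _ ≤ (∫⁻ ω, ENNReal.ofReal (f n ω) ∂μ) / ENNReal.ofReal r ^ n :=
          meas_ge_le_lintegral_div (hf n).ennreal_ofReal (by positivity) (by finiteness)
      _ ≤ (ENNReal.ofReal r)⁻¹ ^ n := by
          rw [← ENNReal.inv_pow, ← one_div]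
          gcongr
          exact hint n
  have hsum : ∑' n, μ {ω | r ^ n ≤ f n ω} ≠ ⊤ := by
    refine ne_top_of_le_ne_top ?_ (ENNReal.tsum_le_tsum hmarkov)
    rw [ENNReal.tsum_geometric, ENNReal.inv_ne_top]
    exact (tsub_pos_of_lt (ENNReal.inv_lt_one.2 (ENNReal.one_lt_ofReal.2 hr))).ne'
  filter_upwards [ae_eventually_notMem hsum] with ω hω
  exact hω.mono fun n hn => not_le.1 hn

/-- Barron's lemma: no sequence of subprobability weights beats the true distribution by more than
a subexponential factor. -/
theorem ae_eventually_weight_lt [IsProbabilityMeasure μ] {S : ℕ → Type*} [∀ k, Fintype (S k)]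
    [∀ k, MeasurableSpace (S k)] [∀ k, MeasurableSingletonClass (S k)] {Φ : ∀ k, Ω → S k}
    (hΦ : ∀ k, Measurable (Φ k)) {Q : ∀ k, S k → ℝ} (hQ : ∀ k, 0 ≤ Q k)
    (hQ1 : ∀ k, ∑ x, Q k x ≤ 1) {r : ℝ} (hr : 1 < r) :
    ∀ᵐ ω ∂μ, ∀ᶠ k in atTop, Q k (Φ k ω) < r ^ k * μ.real (Φ k ⁻¹' {Φ k ω}) := by
  set P := fun k x => μ.real (Φ k ⁻¹' {x})
  have hintegrable k := integrable_comp_of_finite (μ := μ) (hΦ k) fun x => Q k x / P k x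
  have hint k : ∫⁻ ω, ENNReal.ofReal (Q k (Φ k ω) / P k (Φ k ω)) ∂μ ≤ 1 := by
    rw [← ofReal_integral_eq_lintegral_ofReal (hintegrable k)
      (.of_forall fun ω => div_nonneg (hQ k _) measureReal_nonneg),
      integral_comp_fintype (hΦ k) fun x => Q k x / P k x]
    refine ENNReal.ofReal_le_one.2 ((Finset.sum_le_sum fun x _ => ?_).trans (hQ1 k))
    exact mul_div_le_of_nonneg _ (hQ k x)
  filter_upwards [ae_eventually_lt_pow_of_lintegral_le_one
    (fun k => (hintegrable k).aemeasurable) hint hr,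
    ae_all_iff.2 fun k => ae_measureReal_preimage_singleton_pos (μ := μ) (Φ k)] with ω hω hpos
  filter_upwards [hω] with k hk
  exact (div_lt_iff₀ (hpos k)).1 hk

end BorelCantelli

section Blocks

variable {A : Type*}

theorem iterate_shift_apply (s : ℕ) (ω : ℤ → A) (i : ℤ) : shift^[s] ω i = ω (i + s) := by
  induction s generalizing ω with
  | zero => simp
  | succ s ih => rw [Function.iterate_succ_apply, ih, shift, Nat.cast_succ, add_assoc]

theorem blk_iterate_shift (s t l : ℕ) (ω : ℤ → A) :
    blk t l (shift^[s] ω) = blk (s + t) l ω := by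
  funext i
  simp only [blk, iterate_shift_apply]
  congr 1
  push_cast
  ring

theorem blk_shift (s l : ℕ) (ω : ℤ → A) : blk s l (shift ω) = blk (s + 1) l ω := by
  rw [add_comm, ← blk_iterate_shift, Function.iterate_one]

theorem blk_apply_natAdd (s n m : ℕ) (ω : ℤ → A) :
    (fun i => blk s (n + m) ω (Fin.natAdd n i)) = blk (s + n) m ω := by
  funext i
  simp only [blk, Fin.val_natAdd]
  congr 1
  push_cast
  ring

theorem tail_blk (s l : ℕ) (ω : ℤ → A) : Fin.tail (blk s (l + 1) ω) = blk (s + 1) l ω := by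
  funext i
  simp only [Fin.tail, blk, Fin.val_succ]
  congr 1
  push_cast
  ring

section Words

variable [Fintype A]

theorem sum_consEquiv {k : ℕ} (F : (Fin (k + 1) → A) → ℝ) :
    ∑ w, F w = ∑ u : Fin k → A, ∑ a : A, F (Fin.cons a u) := by
  rw [← (Fin.consEquiv fun _ => A).sum_comp, Fintype.sum_prod_type_right]
  rfl

theorem sum_snocEquiv {k : ℕ} (F : (Fin (k + 1) → A) → ℝ) :
    ∑ w, F w = ∑ u : Fin k → A, ∑ b : A, F (Fin.snoc u b) := by
  rw [← (Fin.snocEquiv fun _ => A).sum_comp, Fintype.sum_prod_type_right]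
  rfl

end Words

variable [MeasurableSpace A] {μ : Measure (ℤ → A)}

theorem measurable_blk (s l : ℕ) : Measurable (blk s l : (ℤ → A) → Fin l → A) :=
  measurable_pi_iff.2 fun _ => measurable_pi_apply _

theorem pblock_nonneg (k : ℕ) (w : Fin k → A) : 0 ≤ pblock μ k w := measureReal_nonneg

theorem pblock_le_pblock_init [IsFiniteMeasure μ] {k : ℕ} (w : Fin (k + 1) → A) :
    pblock μ (k + 1) w ≤ pblock μ k (Fin.init w) :=
  measureReal_mono fun _ hω => congrArg Fin.init hω

variable [MeasurableSingletonClass A]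

theorem measureReal_preimage_blk (hμ : MeasurePreserving shift μ μ) (s k : ℕ) (w : Fin k → A) :
    μ.real (blk s k ⁻¹' {w}) = pblock μ k w := by
  rw [show blk s k = blk 0 k ∘ (shift : (ℤ → A) → ℤ → A)^[s] from
    funext fun ω => (blk_iterate_shift s 0 k ω).symm, Set.preimage_comp]
  exact (hμ.iterate s).measureReal_preimage
    (measurable_blk 0 k (measurableSet_singleton w)).nullMeasurableSet

theorem pblock_le_pblock_tail [IsFiniteMeasure μ] (hμ : MeasurePreserving shift μ μ) {k : ℕ}
    (w : Fin (k + 1) → A) : pblock μ (k + 1) w ≤ pblock μ k (Fin.tail w) := by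
  rw [← measureReal_preimage_blk hμ 1 k]
  exact measureReal_mono fun ω hω => (tail_blk 0 k ω).symm.trans (congrArg Fin.tail hω)

section Finite

variable [Finite A] [IsProbabilityMeasure μ]

theorem integrable_comp_blk (s k : ℕ) (F : (Fin k → A) → ℝ) :
    Integrable (fun ω => F (blk s k ω)) μ :=
  integrable_comp_of_finite (measurable_blk s k) F

theorem ae_pblock_blk_pos (hμ : MeasurePreserving shift μ μ) (s k : ℕ) :
    ∀ᵐ ω ∂μ, 0 < pblock μ k (blk s k ω) := by
  filter_upwards [ae_measureReal_preimage_singleton_pos (μ := μ) (blk s k)] with ω hω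
  rwa [← measureReal_preimage_blk hμ s]

end Finite

variable [Fintype A]

theorem sum_pblock_snoc [IsProbabilityMeasure μ] {k : ℕ} (u : Fin k → A) :
    ∑ b, pblock μ (k + 1) (Fin.snoc u b) = pblock μ k u := by
  have hrange : Set.range (Fin.snoc (α := fun _ => A) u) = {w | Fin.init w = u} := by
    ext w
    exact ⟨fun ⟨b, hb⟩ => hb ▸ Fin.init_snoc _ _,
      fun hw => ⟨w (Fin.last k), hw ▸ Fin.snoc_init_self w⟩⟩
  refine (sum_measureReal_preimage_singleton_of_injective (μ := μ) (measurable_blk 0 (k + 1))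
    (Fin.snoc_injective2.right u)).trans ?_
  rw [hrange]
  rfl

theorem sum_pblock_cons [IsProbabilityMeasure μ] (hμ : MeasurePreserving shift μ μ) {k : ℕ}
    (u : Fin k → A) : ∑ a, pblock μ (k + 1) (Fin.cons a u) = pblock μ k u := by
  have hrange : Set.range (fun a => Fin.cons (α := fun _ => A) a u) = {w | Fin.tail w = u} := by
    ext w
    exact ⟨fun ⟨a, ha⟩ => ha ▸ Fin.tail_cons _ _, fun hw => ⟨w 0, hw ▸ Fin.cons_self_tail w⟩⟩
  refine (sum_measureReal_preimage_singleton_of_injective (μ := μ) (measurable_blk 0 (k + 1))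
    (Fin.cons_injective2.left u)).trans ?_
  rw [hrange, ← measureReal_preimage_blk hμ 1]
  simp only [Set.preimage_ofPred_eq, tail_blk]
  rfl

variable [IsProbabilityMeasure μ]

theorem integral_comp_blk (hμ : MeasurePreserving shift μ μ) (s k : ℕ) (F : (Fin k → A) → ℝ) :
    ∫ ω, F (blk s k ω) ∂μ = ∑ w, pblock μ k w * F w := by
  simp only [integral_comp_fintype (measurable_blk s k) F, measureReal_preimage_blk hμ]

theorem sum_pblock (k : ℕ) : ∑ w, pblock μ k w = 1 :=
  (sum_measureReal_preimage_singleton Finset.univ fun w _ =>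
    measurable_blk (A := A) 0 k (measurableSet_singleton w)).trans (by simp)

end Blocks

section HeadConditional

variable {A : Type*} [MeasurableSpace A] {μ : Measure (ℤ → A)}

/-- The conditional probability `P(X_1 = w_1 | X_2^{k+1} = w_2^{k+1})` of the first letter of a word
given the remaining ones. -/
noncomputable def headCondProb (μ : Measure (ℤ → A)) {k : ℕ} (w : Fin (k + 1) → A) : ℝ :=
  pblock μ (k + 1) w / pblock μ k (Fin.tail w)

theorem headCondProb_nonneg {k : ℕ} (w : Fin (k + 1) → A) : 0 ≤ headCondProb μ w :=
  div_nonneg (pblock_nonneg _ _) (pblock_nonneg _ _)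

theorem pblock_mul_inv_headCondProb_le {k : ℕ} (w : Fin (k + 1) → A) :
    pblock μ (k + 1) w * (headCondProb μ w)⁻¹ ≤ pblock μ k (Fin.tail w) := by
  rw [headCondProb, inv_div]
  exact mul_div_le_of_nonneg _ (pblock_nonneg _ _)

/-- The inverse conditional probability `1 / P(X_1 | X_2^{j+1})` at a sample point. -/
noncomputable def invHeadCondProb (μ : Measure (ℤ → A)) (j : ℕ) (ω : ℤ → A) : ℝ :=
  (headCondProb μ (blk 0 (j + 1) ω))⁻¹

theorem invHeadCondProb_nonneg (j : ℕ) (ω : ℤ → A) : 0 ≤ invHeadCondProb μ j ω :=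
  inv_nonneg.2 (headCondProb_nonneg _)

/-- The filtration `j ↦ σ(X_1, …, X_{j+1})`. -/
def blkFiltration (A : Type*) [MeasurableSpace A] :
    Filtration ℕ (inferInstance : MeasurableSpace (ℤ → A)) where
  seq j := MeasurableSpace.comap (blk 0 (j + 1)) inferInstance
  mono' i j hij := by
    have hrestrict : Measurable fun (w : Fin (j + 1) → A) (t : Fin (i + 1)) =>
        w (t.castLE (Nat.succ_le_succ hij)) :=
      measurable_pi_iff.2 fun _ => measurable_pi_apply _
    exact (hrestrict.comp (comap_measurable (blk 0 (j + 1)))).comap_le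
  le' j := (measurable_blk 0 (j + 1)).comap_le

theorem exists_forall_logb_invHeadCondProb_le [Finite A] (j : ℕ) :
    ∃ C, ∀ ω, logb 2 (invHeadCondProb μ j ω) ≤ C := by
  obtain ⟨C, hC⟩ := (Set.finite_range fun w : Fin (j + 1) → A =>
    logb 2 (headCondProb μ w)⁻¹).bddAbove
  exact ⟨C, fun ω => hC ⟨_, rfl⟩⟩

variable [MeasurableSingletonClass A] [IsProbabilityMeasure μ]

theorem headCondProb_le_one (hμ : MeasurePreserving shift μ μ) {k : ℕ} (w : Fin (k + 1) → A) :
    headCondProb μ w ≤ 1 :=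
  div_le_one_of_le₀ (pblock_le_pblock_tail hμ w) (pblock_nonneg _ _)

theorem logb_invHeadCondProb_nonneg (hμ : MeasurePreserving shift μ μ) (j : ℕ) (ω : ℤ → A) :
    0 ≤ logb 2 (invHeadCondProb μ j ω) := by
  rw [invHeadCondProb, logb_inv, neg_nonneg]
  exact logb_nonpos one_lt_two (headCondProb_nonneg _) (headCondProb_le_one hμ _)

section Finite

variable [Finite A]

theorem ae_headCondProb_blk_pos (hμ : MeasurePreserving shift μ μ) (s j : ℕ) :
    ∀ᵐ ω ∂μ, 0 < headCondProb μ (blk s (j + 1) ω) := by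
  filter_upwards [ae_pblock_blk_pos hμ s (j + 1)] with ω hω
  exact div_pos hω (hω.trans_le (pblock_le_pblock_tail hμ _))

theorem ae_one_le_invHeadCondProb (hμ : MeasurePreserving shift μ μ) (j : ℕ) :
    ∀ᵐ ω ∂μ, 1 ≤ invHeadCondProb μ j ω :=
  (ae_headCondProb_blk_pos hμ 0 j).mono fun _ hω =>
    (one_le_inv₀ hω).2 (headCondProb_le_one hμ _)

theorem integrable_invHeadCondProb (j : ℕ) : Integrable (invHeadCondProb μ j) μ :=
  integrable_comp_blk 0 (j + 1) fun w => (headCondProb μ w)⁻¹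

theorem integrable_logb_invHeadCondProb (j : ℕ) :
    Integrable (fun ω => logb 2 (invHeadCondProb μ j ω)) μ :=
  integrable_comp_blk 0 (j + 1) fun w => logb 2 (headCondProb μ w)⁻¹

end Finite

section Fintype

variable [Fintype A]

theorem sum_headCondProb_cons_le_one (hμ : MeasurePreserving shift μ μ) {k : ℕ} (u : Fin k → A) :
    ∑ a, headCondProb μ (Fin.cons a u) ≤ 1 := by
  simp only [headCondProb, Fin.tail_cons, ← Finset.sum_div, sum_pblock_cons hμ]
  exact div_self_le_one _

theorem integral_invHeadCondProb_le_card (hμ : MeasurePreserving shift μ μ) (j : ℕ) :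
    ∫ ω, invHeadCondProb μ j ω ∂μ ≤ Fintype.card A :=
  calc ∫ ω, invHeadCondProb μ j ω ∂μ
      = ∑ u : Fin j → A, ∑ a, pblock μ (j + 1) (Fin.cons a u) * (headCondProb μ (Fin.cons a u))⁻¹ :=
        (integral_comp_blk hμ 0 (j + 1) fun w => (headCondProb μ w)⁻¹).trans (sum_consEquiv _)
    _ ≤ ∑ u : Fin j → A, ∑ _a : A, pblock μ j u :=
        Finset.sum_le_sum fun u _ => Finset.sum_le_sum fun a _ =>
          pblock_mul_inv_headCondProb_le _
    _ = Fintype.card A := by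
        simp only [Finset.sum_const, nsmul_eq_mul, ← Finset.mul_sum, sum_pblock, mul_one,
          Finset.card_univ]

theorem integral_logb_invHeadCondProb (hμ : MeasurePreserving shift μ μ) (j : ℕ) :
    ∫ ω, logb 2 (invHeadCondProb μ j ω) ∂μ = Hblock μ (j + 1) - Hblock μ j := by
  have hlog : ∀ᵐ ω ∂μ, logb 2 (invHeadCondProb μ j ω) =
      logb 2 (pblock μ j (blk 1 j ω)) - logb 2 (pblock μ (j + 1) (blk 0 (j + 1) ω)) := by
    filter_upwards [ae_pblock_blk_pos hμ 0 (j + 1), ae_pblock_blk_pos hμ 1 j] with ω h0 h1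
    rw [invHeadCondProb, headCondProb, tail_blk, zero_add, inv_div, logb_div h1.ne' h0.ne']
  rw [integral_congr_ae hlog,
    integral_sub (integrable_comp_blk 1 j fun w => logb 2 (pblock μ j w))
      (integrable_comp_blk 0 (j + 1) fun w => logb 2 (pblock μ (j + 1) w)),
    integral_comp_blk hμ 1 j fun w => logb 2 (pblock μ j w),
    integral_comp_blk hμ 0 (j + 1) fun w => logb 2 (pblock μ (j + 1) w)]
  simp only [Hblock, Hent]
  ring

theorem sum_pblock_snoc_mul_inv_headCondProb_le {k : ℕ} (w : Fin (k + 1) → A) :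
    ∑ b, pblock μ (k + 2) (Fin.snoc w b) * (headCondProb μ (Fin.snoc w b : Fin (k + 2) → A))⁻¹ ≤
      pblock μ (k + 1) w * (headCondProb μ w)⁻¹ := by
  rcases (pblock_nonneg (μ := μ) (k + 1) w).eq_or_lt' with hw | hw
  · rw [hw, zero_mul]
    refine Finset.sum_nonpos fun b _ => ?_
    have hle := pblock_le_pblock_init (μ := μ) (Fin.snoc w b : Fin (k + 2) → A)
    rw [Fin.init_snoc, hw] at hle
    rw [hle.antisymm (pblock_nonneg _ _), zero_mul]
  · rw [headCondProb, inv_div, mul_div_cancel₀ _ hw.ne', ← sum_pblock_snoc]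
    refine Finset.sum_le_sum fun b _ => (pblock_mul_inv_headCondProb_le _).trans_eq ?_
    rw [← Fin.cons_self_tail w, ← Fin.cons_snoc_eq_snoc_cons, Fin.tail_cons, Fin.tail_cons]

end Fintype

variable [Finite A]

theorem setIntegral_invHeadCondProb_succ_le (j : ℕ) (s : Set (Fin (j + 1) → A)) :
    ∫ ω in blk 0 (j + 1) ⁻¹' s, invHeadCondProb μ (j + 1) ω ∂μ ≤
      ∫ ω in blk 0 (j + 1) ⁻¹' s, invHeadCondProb μ j ω ∂μ := by
  classical
  cases nonempty_fintype A
  have hleft : ∫ ω in blk 0 (j + 1) ⁻¹' s, invHeadCondProb μ (j + 1) ω ∂μ = _ :=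
    setIntegral_comp_fintype (measurable_blk 0 (j + 2)) {w | Fin.init w ∈ s}
      fun w => (headCondProb μ w)⁻¹
  have hright : ∫ ω in blk 0 (j + 1) ⁻¹' s, invHeadCondProb μ j ω ∂μ = _ :=
    setIntegral_comp_fintype (measurable_blk 0 (j + 1)) s fun w => (headCondProb μ w)⁻¹
  rw [hleft, hright, sum_snocEquiv]
  refine Finset.sum_le_sum fun w _ => ?_
  simp only [Set.indicator_apply, Set.mem_ofPred_eq, Fin.init_snoc]
  split_ifs
  · exact sum_pblock_snoc_mul_inv_headCondProb_le w
  · simp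

theorem supermartingale_invHeadCondProb :
    Supermartingale (invHeadCondProb μ) (blkFiltration A) μ := by
  cases nonempty_fintype A
  refine supermartingale_of_setIntegral_succ_le (fun j => ?_) integrable_invHeadCondProb ?_
  · exact ((measurable_of_finite fun w => (headCondProb μ w)⁻¹).comp
      (comap_measurable (blk 0 (j + 1)))).stronglyMeasurable
  · rintro j _ ⟨s, -, rfl⟩
    exact setIntegral_invHeadCondProb_succ_le j s

theorem exists_tendsto_invHeadCondProb (hμ : MeasurePreserving shift μ μ) :
    ∃ Y : (ℤ → A) → ℝ, Measurable Y ∧ (∀ ω, 1 ≤ Y ω) ∧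
      ∀ᵐ ω ∂μ, Tendsto (fun j => invHeadCondProb μ j ω) atTop (nhds (Y ω)) := by
  cases nonempty_fintype A
  have hbound j : eLpNorm ((-invHeadCondProb μ) j) 1 μ ≤ (Fintype.card A : NNReal) := by
    rw [Pi.neg_apply, eLpNorm_neg, eLpNorm_one_eq_lintegral_enorm]
    simp only [enorm_of_nonneg (invHeadCondProb_nonneg j _)]
    rw [← ofReal_integral_eq_lintegral_ofReal (integrable_invHeadCondProb j)
      (.of_forall (invHeadCondProb_nonneg j))]
    exact (ENNReal.ofReal_le_ofReal (integral_invHeadCondProb_le_card hμ j)).trans (by simp)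
  have hlim : ∀ᵐ ω ∂μ, ∃ y, Tendsto (fun j => invHeadCondProb μ j ω) atTop (nhds y) :=
    (supermartingale_invHeadCondProb.neg.exists_ae_tendsto_of_bdd hbound).mono
      fun ω ⟨y, hy⟩ => ⟨-y, by simpa using hy.neg⟩
  obtain ⟨Y, hY, hYlim⟩ := measurable_limit_of_tendsto_metrizable_ae
    (fun j => (integrable_invHeadCondProb j).aemeasurable) hlim
  refine ⟨fun ω => max 1 (Y ω), measurable_const.max hY, fun ω => le_max_left _ _, ?_⟩
  filter_upwards [hYlim, ae_all_iff.2 (ae_one_le_invHeadCondProb hμ)] with ω hω hone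
  rwa [max_eq_right (ge_of_tendsto' hω hone)]

end HeadConditional

section SMB

theorem frequently_lt_sub_of_tendsto_div {a : ℕ → ℝ} {h c : ℝ}
    (ha : Tendsto (fun k : ℕ => a k / k) atTop (nhds h)) (hc : c < h) :
    ∃ᶠ j in atTop, c < a (j + 1) - a j := by
  intro hsmall
  obtain ⟨J, hJ⟩ := eventually_atTop.1 hsmall
  have hdecr : AntitoneOn (fun k : ℕ => a k - k * c) (Set.Ici J) :=
    antitoneOn_of_succ_le Set.ordConnected_Ici fun j _ hj _ => by
      have := not_lt.1 (hJ j hj)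
      rw [Nat.succ_eq_succ, Nat.cast_succ]
      linarith
  have hlim : Tendsto (fun k : ℕ => (a J - J * c) / k + c) atTop (nhds (0 + c)) :=
    (tendsto_const_div_atTop_nhds_zero_nat _).add_const c
  refine hc.not_ge (zero_add c ▸ le_of_tendsto_of_tendsto ha hlim ?_)
  filter_upwards [eventually_gt_atTop 0, eventually_ge_atTop J] with k hk hkJ
  have hk0 : (0 : ℝ) < k := Nat.cast_pos.2 hk
  rw [div_add' _ _ _ hk0.ne']
  gcongr
  linarith [hdecr Set.self_mem_Ici hkJ hkJ]

theorem logb_le_min_add {y : ℝ} (hy : 0 < y) (C : ℕ) :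
    logb 2 y ≤ min (logb 2 y) C + 2 * (1 / 2) ^ C * y := by
  rcases le_total (logb 2 y) C with hle | hle
  · rw [min_eq_left hle, le_add_iff_nonneg_right]
    positivity
  · have hscaled : logb 2 y - C = logb 2 ((1 / 2) ^ C * y) := by
      rw [logb_mul (by positivity) hy.ne', logb_pow, one_div, logb_inv,
        logb_self_eq_one one_lt_two]
      ring
    have hlog : logb 2 ((1 / 2) ^ C * y) ≤ 2 * ((1 / 2) ^ C * y) := by
      rw [logb, div_le_iff₀ (log_pos one_lt_two)]
      have hz : 0 < (1 / 2) ^ C * y := by positivity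
      nlinarith [log_le_sub_one_of_pos hz, log_two_gt_d9]
    rw [min_eq_right hle]
    linarith

theorem norm_min_logb_le {y : ℝ} (hy : 1 ≤ y) (C : ℕ) : ‖min (logb 2 y) C‖ ≤ C := by
  rw [norm_of_nonneg (le_min (logb_nonneg one_lt_two hy) C.cast_nonneg)]
  exact min_le_right _ _

section Truncation

variable {Ω : Type*} [MeasurableSpace Ω] {ν : Measure Ω} [IsFiniteMeasure ν]

theorem integrable_min_logb {Y : Ω → ℝ} (hY : AEMeasurable Y ν) (hone : ∀ᵐ ω ∂ν, 1 ≤ Y ω)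
    (C : ℕ) : Integrable (fun ω => min (logb 2 (Y ω)) C) ν :=
  (integrable_const (C : ℝ)).mono'
    (((measurable_log.comp_aemeasurable hY).div_const _).min
      aemeasurable_const).aestronglyMeasurable
    (hone.mono fun _ hω => norm_min_logb_le hω C)

theorem integral_logb_le_integral_min_logb_add {Y : Ω → ℝ} (hY : Integrable Y ν)
    (hone : ∀ᵐ ω ∂ν, 1 ≤ Y ω) (C : ℕ) :
    ∫ ω, logb 2 (Y ω) ∂ν ≤ ∫ ω, min (logb 2 (Y ω)) C ∂ν + 2 * (1 / 2) ^ C * ∫ ω, Y ω ∂ν := by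
  have htrunc := integrable_min_logb hY.aemeasurable hone C
  rw [← integral_const_mul, ← integral_add htrunc (hY.const_mul _)]
  refine integral_mono_of_nonneg (hone.mono fun ω hω => logb_nonneg one_lt_two hω)
    (htrunc.add (hY.const_mul _)) ?_
  filter_upwards [hone] with ω hω
  exact logb_le_min_add (one_pos.trans_le hω) C

theorem exists_lt_integral_min_logb {Y : ℕ → Ω → ℝ} {Z : Ω → ℝ} {K a c : ℝ}
    (hY : ∀ j, Integrable (Y j) ν) (hone : ∀ j, ∀ᵐ ω ∂ν, 1 ≤ Y j ω)
    (hlim : ∀ᵐ ω ∂ν, Tendsto (fun j => Y j ω) atTop (nhds (Z ω)))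
    (hK : ∀ j, ∫ ω, Y j ω ∂ν ≤ K) (ha : ∃ᶠ j in atTop, a ≤ ∫ ω, logb 2 (Y j ω) ∂ν) (hc : c < a) :
    ∃ C : ℕ, c < ∫ ω, min (logb 2 (Z ω)) C ∂ν := by
  have hsmall : Tendsto (fun C : ℕ => 2 * (1 / 2) ^ C * K) atTop (nhds (2 * 0 * K)) :=
    ((tendsto_pow_atTop_nhds_zero_of_lt_one (by norm_num) (by norm_num)).const_mul 2).mul_const K
  rw [mul_zero, zero_mul] at hsmall
  obtain ⟨C, hC⟩ := (hsmall.eventually_lt_const (sub_pos.2 hc)).exists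
  have hconv : Tendsto (fun j => ∫ ω, min (logb 2 (Y j ω)) C ∂ν) atTop
      (nhds (∫ ω, min (logb 2 (Z ω)) C ∂ν)) := by
    refine tendsto_integral_of_dominated_convergence (fun _ => (C : ℝ))
      (fun j => (integrable_min_logb (hY j).aemeasurable (hone j) C).aestronglyMeasurable)
      (integrable_const _) (fun j => (hone j).mono fun ω hω => norm_min_logb_le hω C) ?_
    filter_upwards [hlim, ae_all_iff.2 hone] with ω hω hge
    exact ((hω.log (one_pos.trans_le (ge_of_tendsto' hω hge)).ne').div_const _).min
      tendsto_const_nhds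
  refine ⟨C, (lt_sub_comm.1 hC).trans_le ?_⟩
  refine ge_of_tendsto_of_frequently hconv (ha.mono fun j hj => ?_)
  have htail := mul_le_mul_of_nonneg_left (hK j) (show (0 : ℝ) ≤ 2 * (1 / 2) ^ C by positivity)
  linarith [integral_logb_le_integral_min_logb_add (hY j) (hone j) C]

end Truncation

theorem prod_range_div_antidiagonal {g : ℕ → ℕ → ℝ} (hg : ∀ s k, g s k ≠ 0) (s n m : ℕ) :
    ∏ i ∈ Finset.range n, g (s + i + 1) (n - 1 - i + m) / g (s + i) (n - 1 - i + m + 1) =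
      g (s + n) m / g s (n + m) := by
  induction n generalizing s with
  | zero => simp [hg]
  | succ n ih =>
    have hpeel : ∀ i ∈ Finset.range n,
        g (s + (i + 1) + 1) (n + 1 - 1 - (i + 1) + m) /
          g (s + (i + 1)) (n + 1 - 1 - (i + 1) + m + 1) =
        g (s + 1 + i + 1) (n - 1 - i + m) / g (s + 1 + i) (n - 1 - i + m + 1) := fun i _ => by
      rw [show n + 1 - 1 - (i + 1) = n - 1 - i by omega, add_right_comm s 1 i, add_assoc s i 1]
    rw [Finset.prod_range_succ', Finset.prod_congr rfl hpeel, ih, add_tsub_cancel_right, tsub_zero,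
      add_zero, div_mul_div_cancel₀ (hg _ _), add_right_comm n m 1, add_right_comm s 1 n,
      add_assoc s n 1]

variable {A : Type*}

section Chain

variable [MeasurableSpace A] {μ : Measure (ℤ → A)}

theorem invHeadCondProb_iterate_shift (j i : ℕ) (ω : ℤ → A) :
    invHeadCondProb μ j (shift^[i] ω) =
      pblock μ j (blk (i + 1) j ω) / pblock μ (j + 1) (blk i (j + 1) ω) := by
  rw [invHeadCondProb, blk_iterate_shift, add_zero, headCondProb, tail_blk, inv_div]

theorem prod_invHeadCondProb_iterate_shift {ω : ℤ → A} (hω : ∀ s k, 0 < pblock μ k (blk s k ω))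
    (n m : ℕ) :
    ∏ i ∈ Finset.range n, invHeadCondProb μ (n - 1 - i + m) (shift^[i] ω) =
      pblock μ m (blk n m ω) / pblock μ (n + m) (blk 0 (n + m) ω) := by
  simpa [invHeadCondProb_iterate_shift] using
    prod_range_div_antidiagonal (g := fun s k => pblock μ k (blk s k ω))
      (fun s k => (hω s k).ne') 0 n m

end Chain

section Fatou

theorem sum_appendEquiv [Fintype A] {n m : ℕ} (F : (Fin (n + m) → A) → ℝ) :
    ∑ w, F w = ∑ u : Fin n → A, ∑ v : Fin m → A, F (Fin.append u v) := by
  rw [← (Fin.appendEquiv n m).sum_comp, Fintype.sum_prod_type]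
  rfl

variable [Finite A] [MeasurableSpace A] [MeasurableSingletonClass A] {μ : Measure (ℤ → A)}
  [IsProbabilityMeasure μ]

theorem lintegral_pblock_mul_div_le_one (n m : ℕ) :
    ∫⁻ ω, ENNReal.ofReal (pblock μ n (blk 0 n ω) *
      (pblock μ m (blk n m ω) / pblock μ (n + m) (blk 0 (n + m) ω))) ∂μ ≤ 1 := by
  cases nonempty_fintype A
  set F : (Fin (n + m) → A) → ℝ := fun w => pblock μ n (fun i => w (Fin.castAdd m i)) *
    (pblock μ m (fun i => w (Fin.natAdd n i)) / pblock μ (n + m) w)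
  have hF : ∀ ω, pblock μ n (blk 0 n ω) *
      (pblock μ m (blk n m ω) / pblock μ (n + m) (blk 0 (n + m) ω)) = F (blk 0 (n + m) ω) :=
    fun ω => by simp only [F, blk_apply_natAdd, zero_add]; rfl
  have hF0 : ∀ w, 0 ≤ F w := fun w =>
    mul_nonneg (pblock_nonneg _ _) (div_nonneg (pblock_nonneg _ _) (pblock_nonneg _ _))
  simp only [hF]
  rw [← ofReal_integral_eq_lintegral_ofReal (integrable_comp_blk 0 (n + m) F)
    (.of_forall fun ω => hF0 _), ENNReal.ofReal_le_one]
  calc ∫ ω, F (blk 0 (n + m) ω) ∂μ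
      = ∑ u : Fin n → A, ∑ v : Fin m → A,
          pblock μ (n + m) (Fin.append u v) * F (Fin.append u v) :=
        (integral_comp_fintype (measurable_blk 0 (n + m)) F).trans (sum_appendEquiv _)
    _ ≤ ∑ u : Fin n → A, ∑ v : Fin m → A, pblock μ n u * pblock μ m v := by
        refine Finset.sum_le_sum fun u _ => Finset.sum_le_sum fun v _ => ?_
        simp only [F, Fin.append_left, Fin.append_right]
        rw [mul_left_comm]
        exact mul_le_mul_of_nonneg_left (mul_div_le_of_nonneg _ (pblock_nonneg _ _))
          (pblock_nonneg _ _)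
    _ = 1 := by simp only [← Finset.mul_sum, sum_pblock, mul_one]

theorem lintegral_pblock_mul_prod_le_one (hμ : MeasurePreserving shift μ μ) {Y : (ℤ → A) → ℝ}
    (hY : ∀ᵐ ω ∂μ, Tendsto (fun j => invHeadCondProb μ j ω) atTop (nhds (Y ω))) (n : ℕ) :
    ∫⁻ ω, ENNReal.ofReal (pblock μ n (blk 0 n ω) *
      ∏ i ∈ Finset.range n, Y (shift^[i] ω)) ∂μ ≤ 1 := by
  set Z : ℕ → (ℤ → A) → ℝ := fun m ω => pblock μ n (blk 0 n ω) *
    (pblock μ m (blk n m ω) / pblock μ (n + m) (blk 0 (n + m) ω))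
  have hblk s k : Measurable fun ω => pblock μ k (blk s k ω) :=
    (measurable_of_finite (pblock μ k)).comp (measurable_blk s k)
  have hZ m : Measurable fun ω => ENNReal.ofReal (Z m ω) :=
    ((hblk 0 n).mul ((hblk n m).div (hblk 0 (n + m)))).ennreal_ofReal
  have hlim : ∀ᵐ ω ∂μ, Tendsto (fun m => ENNReal.ofReal (Z m ω)) atTop
      (nhds (ENNReal.ofReal (pblock μ n (blk 0 n ω) *
        ∏ i ∈ Finset.range n, Y (shift^[i] ω)))) := by
    filter_upwards [ae_all_iff.2 fun i => (hμ.iterate i).quasiMeasurePreserving.ae hY,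
      ae_all_iff.2 fun s => ae_all_iff.2 fun k => ae_pblock_blk_pos hμ s k] with ω hω hpos
    refine (ENNReal.continuous_ofReal.tendsto _).comp (Tendsto.const_mul _ ?_)
    simp only [← prod_invHeadCondProb_iterate_shift hpos]
    exact tendsto_finsetProd _ fun i _ =>
      (hω i).comp (tendsto_add_atTop_nat (n - 1 - i) |>.congr fun m => add_comm _ _)
  calc _ = ∫⁻ ω, liminf (fun m => ENNReal.ofReal (Z m ω)) atTop ∂μ :=
        lintegral_congr_ae (hlim.mono fun ω hω => hω.liminf_eq.symm)
    _ ≤ liminf (fun m => ∫⁻ ω, ENNReal.ofReal (Z m ω) ∂μ) atTop := lintegral_liminf_le hZ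
    _ ≤ 1 := liminf_le_of_frequently_le'
        (Frequently.of_forall fun m => lintegral_pblock_mul_div_le_one n m)

end Fatou

theorem ae_eventually_pblock_blk_le [Fintype A] [MeasurableSpace A] [MeasurableSingletonClass A]
    {μ : Measure (ℤ → A)} [IsProbabilityMeasure μ] (hμ : Ergodic shift μ) {h c : ℝ}
    (hrate : Tendsto (fun k => Hblock μ k / k) atTop (nhds h)) (hc : c < h) :
    ∀ᵐ ω ∂μ, ∀ᶠ n : ℕ in atTop, pblock μ n (blk 0 n ω) ≤ (2 : ℝ) ^ (-(n * c)) := by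
  obtain ⟨b, hcb, hbh⟩ := exists_between hc
  obtain ⟨d, hbd, hdh⟩ := exists_between hbh
  obtain ⟨Y, hY, hone, hlim⟩ := exists_tendsto_invHeadCondProb hμ.toMeasurePreserving
  have hentropy : ∃ᶠ j in atTop, d ≤ ∫ ω, logb 2 (invHeadCondProb μ j ω) ∂μ := by
    simp only [integral_logb_invHeadCondProb hμ.toMeasurePreserving]
    exact (frequently_lt_sub_of_tendsto_div hrate hdh).mono fun _ => le_of_lt
  obtain ⟨C, hC⟩ := exists_lt_integral_min_logb integrable_invHeadCondProb
    (ae_one_le_invHeadCondProb hμ.toMeasurePreserving) hlim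
    (integral_invHeadCondProb_le_card hμ.toMeasurePreserving) hentropy hbd
  have hprod_meas n : Measurable fun ω =>
      pblock μ n (blk 0 n ω) * ∏ i ∈ Finset.range n, Y (shift^[i] ω) :=
    ((measurable_of_finite (pblock μ n)).comp (measurable_blk 0 n)).mul
      (Finset.measurable_prod _ fun i _ => hY.comp (hμ.measurable.iterate i))
  filter_upwards [ae_tendsto_birkhoffAverage hμ
      (integrable_min_logb hY.aemeasurable (.of_forall hone) C),
    ae_eventually_lt_pow_of_lintegral_le_one (fun n => (hprod_meas n).aemeasurable)
      (lintegral_pblock_mul_prod_le_one hμ.toMeasurePreserving hlim)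
      (one_lt_rpow one_lt_two (sub_pos.2 hcb))] with ω hbirkhoff hweight
  filter_upwards [hbirkhoff.eventually_const_lt hC, hweight, eventually_gt_atTop 0] with n hn
    hlt hn0
  have hprod : (2 : ℝ) ^ (n * b) ≤ ∏ i ∈ Finset.range n, Y (shift^[i] ω) := by
    rw [← le_logb_iff_rpow_le one_lt_two (Finset.prod_pos fun i _ => one_pos.trans_le (hone _)),
      logb_prod _ _ fun i _ => (one_pos.trans_le (hone _)).ne']
    rw [birkhoffAverage, smul_eq_mul, lt_inv_mul_iff₀ (Nat.cast_pos.2 hn0)] at hn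
    exact hn.le.trans (Finset.sum_le_sum fun i _ => min_le_left _ _)
  have hle := (mul_le_mul_of_nonneg_left hprod (pblock_nonneg n (blk 0 n ω))).trans hlt.le
  rwa [← rpow_mul_natCast two_pos.le, ← le_div_iff₀ (by positivity), ← rpow_sub two_pos,
    show (b - c) * n - n * b = -(n * c) by ring] at hle

end SMB

section MarkovWeight

variable {A : Type*} [Fintype A] [MeasurableSpace A] {μ : Measure (ℤ → A)}

/-- The `m`-th order Markov approximation of the law of `k`-blocks: read from the left, each letter
is weighted by its conditional probability given the next `m` letters, the last `m` letters being
weighted uniformly. It is a subprobability weight that is computed from `μ` alone. -/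
noncomputable def markovWeight (μ : Measure (ℤ → A)) (m : ℕ) : (k : ℕ) → (Fin k → A) → ℝ
  | 0, _ => 1
  | k + 1, w =>
    (if h : m ≤ k then headCondProb μ fun j : Fin (m + 1) => w (j.castLE (Nat.succ_le_succ h))
      else (Fintype.card A : ℝ)⁻¹) * markovWeight μ m k (Fin.tail w)

theorem markovWeight_nonneg (m : ℕ) : ∀ (k : ℕ) (w : Fin k → A), 0 ≤ markovWeight μ m k w
  | 0, _ => zero_le_one
  | k + 1, w => by
    rw [markovWeight]
    refine mul_nonneg ?_ (markovWeight_nonneg m k _)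
    split_ifs
    · exact headCondProb_nonneg _
    · positivity

theorem markovWeight_succ_blk (m k : ℕ) (ω : ℤ → A) :
    markovWeight μ m (k + 1) (blk 0 (k + 1) ω) =
      (if m ≤ k then headCondProb μ (blk 0 (m + 1) ω) else (Fintype.card A : ℝ)⁻¹) *
        markovWeight μ m k (blk 0 k (shift ω)) := by
  rw [markovWeight, tail_blk, blk_shift]
  rfl

theorem markovWeight_blk_pos {m : ℕ} {ω : ℤ → A} (hω : ∀ s, 0 < headCondProb μ (blk s (m + 1) ω))
    (k : ℕ) : 0 < markovWeight μ m k (blk 0 k ω) := by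
  induction k generalizing ω with
  | zero => exact one_pos
  | succ k ih =>
    rw [markovWeight_succ_blk]
    refine mul_pos ?_ (ih fun s => blk_shift s (m + 1) ω ▸ hω (s + 1))
    have := Fintype.card_pos_iff.2 ⟨ω 0⟩
    split_ifs
    · exact hω 0
    · positivity

variable [MeasurableSingletonClass A] [IsProbabilityMeasure μ]

theorem sum_markovWeight_le_one (hμ : MeasurePreserving shift μ μ) (m : ℕ) :
    ∀ k, ∑ w, markovWeight μ m k w ≤ 1
  | 0 => by simp [markovWeight]
  | k + 1 => by
    rw [sum_consEquiv]
    refine (Finset.sum_le_sum fun u _ => ?_).trans (sum_markovWeight_le_one hμ m k)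
    simp only [markovWeight, Fin.tail_cons, ← Finset.sum_mul]
    refine mul_le_of_le_one_left (markovWeight_nonneg m k u) ?_
    split_ifs with h
    · refine le_of_eq_of_le (Finset.sum_congr rfl fun a _ => congrArg _ ?_)
        (sum_headCondProb_cons_le_one hμ fun j : Fin m => u (j.castLE h))
      funext j
      cases j using Fin.cases <;> rfl
    · simpa using mul_inv_le_one

theorem neg_logb_markovWeight_blk_le (hμ : MeasurePreserving shift μ μ) {m : ℕ} {ω : ℤ → A}
    (hω : ∀ s, 0 < headCondProb μ (blk s (m + 1) ω)) (k : ℕ) :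
    -logb 2 (markovWeight μ m k (blk 0 k ω)) ≤
      birkhoffSum shift (fun ω => logb 2 (invHeadCondProb μ m ω)) k ω +
        (min k m : ℕ) * logb 2 (Fintype.card A) := by
  induction k generalizing ω with
  | zero => simp [markovWeight]
  | succ k ih =>
    have hshift : ∀ s, 0 < headCondProb μ (blk s (m + 1) (shift ω)) := fun s =>
      blk_shift s (m + 1) ω ▸ hω (s + 1)
    have htail := ih hshift
    have hcard : (Fintype.card A : ℝ) ≠ 0 :=
      Nat.cast_ne_zero.2 (Fintype.card_pos_iff.2 ⟨ω 0⟩).ne'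
    rw [markovWeight_succ_blk, birkhoffSum_succ']
    split_ifs with h
    · rw [logb_mul (hω 0).ne' (markovWeight_blk_pos hshift k).ne', invHeadCondProb, logb_inv]
      rw [min_eq_right h] at htail
      rw [min_eq_right (h.trans k.le_succ)]
      linarith
    · rw [logb_mul (inv_ne_zero hcard) (markovWeight_blk_pos hshift k).ne', logb_inv]
      rw [min_eq_left (not_le.1 h).le] at htail
      rw [min_eq_left (Nat.succ_le_of_lt (not_le.1 h)), Nat.cast_succ]
      linarith [logb_invHeadCondProb_nonneg hμ m ω]

theorem rpow_le_prod_markovWeight (hμ : MeasurePreserving shift μ μ) {m : ℕ} {ω : ℤ → A}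
    (hω : ∀ s, 0 < headCondProb μ (blk s (m + 1) ω)) (k M : ℕ) (J : Finset (Fin M)) :
    (2 : ℝ) ^ (-(∑ i ∈ J, birkhoffSum shift (fun ω => logb 2 (invHeadCondProb μ m ω)) k
        (shift^[i * k] ω) + J.card * (m * logb 2 (Fintype.card A)))) ≤
      ∏ i ∈ J, markovWeight μ m k (blk (i * k) k ω) := by
  have hblk : ∀ i : Fin M, blk (i * k) k ω = blk 0 k (shift^[i * k] ω) := fun i =>
    (blk_iterate_shift (i * k) 0 k ω).symm
  have hpos : ∀ (i : Fin M) s, 0 < headCondProb μ (blk s (m + 1) (shift^[i * k] ω)) := fun i s =>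
    blk_iterate_shift (i * k) s (m + 1) ω ▸ hω _
  simp only [hblk]
  rw [← le_logb_iff_rpow_le one_lt_two (Finset.prod_pos fun i _ =>
      markovWeight_blk_pos (hpos i) k),
    logb_prod _ _ fun i _ => (markovWeight_blk_pos (hpos i) k).ne',
    neg_le, ← Finset.sum_neg_distrib, ← nsmul_eq_mul, ← Finset.sum_const,
    ← Finset.sum_add_distrib]
  refine Finset.sum_le_sum fun i _ => (neg_logb_markovWeight_blk_le hμ (hpos i) k).trans ?_
  gcongr
  · exact div_nonneg (log_natCast_nonneg _) (log_nonneg one_le_two)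
  · exact min_le_right _ _

theorem ae_eventually_rpow_le_prod_markovWeight (hμ : Ergodic shift μ) (m : ℕ) {δ : ℝ}
    (hδ : 0 < δ) :
    ∀ᵐ ω ∂μ, ∀ᶠ k : ℕ in atTop, ∀ M : ℕ, 0 < M → ∀ J : Finset (Fin M),
      (2 : ℝ) ^ (-(J.card * (k * (Hblock μ (m + 1) - Hblock μ m)) + M * (k * δ))) ≤
        ∏ i ∈ J, markovWeight μ m k (blk (i * k) k ω) := by
  obtain ⟨C, hC⟩ := exists_forall_logb_invHeadCondProb_le (μ := μ) m
  filter_upwards [ae_eventually_sum_birkhoffSum_le hμ (integrable_logb_invHeadCondProb m)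
      (logb_invHeadCondProb_nonneg hμ.toMeasurePreserving m) hC (half_pos hδ),
    ae_all_iff.2 fun s => ae_headCondProb_blk_pos hμ.toMeasurePreserving s m] with ω hbirkhoff hpos
  filter_upwards [hbirkhoff, (tendsto_natCast_atTop_atTop.atTop_mul_const
    (half_pos hδ)).eventually_ge_atTop (m * logb 2 (Fintype.card A))] with k hk hboundary M hM J
  refine le_trans ?_ (rpow_le_prod_markovWeight hμ.toMeasurePreserving hpos k M J)
  have hsum := hk M hM J
  rw [integral_logb_invHeadCondProb hμ.toMeasurePreserving] at hsum
  have hJ : J.card * (m * logb 2 (Fintype.card A)) ≤ M * (k * (δ / 2)) :=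
    mul_le_mul (Nat.cast_le.2 (by simpa using J.card_le_univ)) hboundary
      (mul_nonneg (Nat.cast_nonneg _)
        (div_nonneg (log_natCast_nonneg _) (log_nonneg one_le_two))) (Nat.cast_nonneg _)
  exact rpow_le_rpow_of_exponent_le one_le_two (by linarith)

end MarkovWeight

section DictionaryCode

variable {W : Type*} [DecidableEq W] {q : W → ℝ} {β M : ℕ}

/-- The even mixture of the uniform weight on a dictionary `b` and a weight `q`: a word is coded
either by its position in the dictionary or by `q`. -/
noncomputable def dictWeight (q : W → ℝ) (b : Fin β → W) (w : W) : ℝ :=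
  ((∑ j, if b j = w then 1 else 0) / β + q w) / 2

theorem dictWeight_nonneg (hq : ∀ w, 0 ≤ q w) (b : Fin β → W) (w : W) : 0 ≤ dictWeight q b w := by
  have := hq w
  unfold dictWeight
  positivity

theorem half_le_dictWeight (q : W → ℝ) (b : Fin β → W) (w : W) : q w / 2 ≤ dictWeight q b w := by
  unfold dictWeight
  gcongr
  exact le_add_of_nonneg_left (by positivity)

theorem inv_le_dictWeight (hq : ∀ w, 0 ≤ q w) {b : Fin β → W} {w : W} (hw : w ∈ Set.range b) :
    (β : ℝ)⁻¹ / 2 ≤ dictWeight q b w := by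
  obtain ⟨j, rfl⟩ := hw
  unfold dictWeight
  rw [← one_div]
  gcongr
  refine le_add_of_le_of_nonneg ?_ (hq _)
  gcongr
  simpa using Finset.single_le_sum (f := fun i => if b i = b j then (1 : ℝ) else 0)
    (fun i _ => by positivity) (Finset.mem_univ j)

theorem prod_div_le_prod_dictWeight (hq : ∀ w, 0 ≤ q w) {b : Fin β → W} {x : Fin M → W}
    {I : Finset (Fin M)} (hI : ∀ i ∈ I, x i ∈ Set.range b) :
    (∏ i ∈ Iᶜ, q (x i)) / (2 ^ M * β ^ I.card) ≤ ∏ i, dictWeight q b (x i) := by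
  calc (∏ i ∈ Iᶜ, q (x i)) / (2 ^ M * β ^ I.card)
      = (∏ _i ∈ I, (β : ℝ)⁻¹ / 2) * ∏ i ∈ Iᶜ, q (x i) / 2 := by
        have htwo : (2 : ℝ) ^ M = 2 ^ I.card * 2 ^ Iᶜ.card := by
          rw [← pow_add, Finset.card_add_card_compl, Fintype.card_fin]
        rw [Finset.prod_const, Finset.prod_div_distrib, Finset.prod_const, div_pow, inv_pow, htwo]
        ring
    _ ≤ (∏ i ∈ I, dictWeight q b (x i)) * ∏ i ∈ Iᶜ, dictWeight q b (x i) :=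
        mul_le_mul
          (Finset.prod_le_prod (fun _ _ => by positivity) fun i hi =>
            inv_le_dictWeight hq (hI i hi))
          (Finset.prod_le_prod (fun i _ => div_nonneg (hq _) zero_le_two) fun i _ =>
            half_le_dictWeight q b _)
          (Finset.prod_nonneg fun i _ => div_nonneg (hq _) zero_le_two)
          (Finset.prod_nonneg fun i _ => dictWeight_nonneg hq b _)
    _ = ∏ i, dictWeight q b (x i) := Finset.prod_mul_prod_compl _ _

theorem exists_subset_range_of_card_le {W : Type*} [Nonempty W] {B : Finset W} (hB : B.card ≤ β) :
    ∃ b : Fin β → W, ↑B ⊆ Set.range b := by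
  obtain ⟨e⟩ : Nonempty (B ↪ Fin β) := Function.Embedding.nonempty_of_card_le (by simpa using hB)
  exact ⟨Function.extend e Subtype.val fun _ => Classical.arbitrary W, fun w hw =>
    ⟨e ⟨w, hw⟩, e.injective.extend_apply _ _ _⟩⟩

variable [Fintype W]

theorem sum_dictWeight_le_one (hq : ∑ w, q w ≤ 1) (b : Fin β → W) :
    ∑ w, dictWeight q b w ≤ 1 := by
  have hcount : ∑ w, ∑ j, (if b j = w then (1 : ℝ) else 0) = β := by
    rw [Finset.sum_comm]
    simp
  simp only [dictWeight, ← Finset.sum_div, Finset.sum_add_distrib, hcount]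
  linarith [div_self_le_one (β : ℝ)]

/-- The weight of the code for `M` words that first spells out a dictionary of `β` words, and then
codes every word by `dictWeight`. -/
noncomputable def codeWeight (q : W → ℝ) (β M : ℕ) (x : Fin M → W) : ℝ :=
  (∑ b : Fin β → W, ∏ i, dictWeight q b (x i)) / (Fintype.card W : ℝ) ^ β

theorem codeWeight_nonneg (hq : ∀ w, 0 ≤ q w) (x : Fin M → W) : 0 ≤ codeWeight q β M x :=
  div_nonneg (Finset.sum_nonneg fun b _ => Finset.prod_nonneg fun i _ => dictWeight_nonneg hq b _)
    (by positivity)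

theorem sum_codeWeight_le_one (hq : ∀ w, 0 ≤ q w) (hq1 : ∑ w, q w ≤ 1) :
    ∑ x, codeWeight q β M x ≤ 1 := by
  have hdict : ∀ b : Fin β → W, ∑ x : Fin M → W, ∏ i, dictWeight q b (x i) ≤ 1 := fun b => by
    rw [← Fintype.sum_pow]
    exact pow_le_one₀ (Finset.sum_nonneg fun w _ => dictWeight_nonneg hq b w)
      (sum_dictWeight_le_one hq1 b)
  simp only [codeWeight, ← Finset.sum_div]
  rw [Finset.sum_comm]
  refine div_le_one_of_le₀ ((Finset.sum_le_sum fun b _ => hdict b).trans_eq ?_) (by positivity)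
  simp

theorem prod_div_le_codeWeight [Nonempty W] (hq : ∀ w, 0 ≤ q w) {B : Finset W} (hB : B.card ≤ β)
    (x : Fin M → W) {I : Finset (Fin M)} (hI : ∀ i ∈ I, x i ∈ B) :
    (∏ i ∈ Iᶜ, q (x i)) / ((Fintype.card W : ℝ) ^ β * 2 ^ M * β ^ I.card) ≤
      codeWeight q β M x := by
  obtain ⟨b, hb⟩ := exists_subset_range_of_card_le hB
  rw [mul_assoc, div_mul_eq_div_div_swap, codeWeight]
  gcongr
  calc (∏ i ∈ Iᶜ, q (x i)) / (2 ^ M * β ^ I.card)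
      ≤ ∏ i, dictWeight q b (x i) := prod_div_le_prod_dictWeight hq fun i hi => hb (hI i hi)
    _ ≤ ∑ b : Fin β → W, ∏ i, dictWeight q b (x i) :=
        Finset.single_le_sum (f := fun b => ∏ i, dictWeight q b (x i))
          (fun b _ => Finset.prod_nonneg fun i _ => dictWeight_nonneg hq b _) (Finset.mem_univ b)

end DictionaryCode

section Entropy

variable {W : Type*} [Fintype W] {p : W → ℝ}

theorem Hent_nonneg (hp : ∀ w, 0 ≤ p w) (hsum : ∑ w, p w ≤ 1) : 0 ≤ Hent p := by
  have hp1 : ∀ w, p w ≤ 1 := fun w =>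
    (Finset.single_le_sum (fun v _ => hp v) (Finset.mem_univ w)).trans hsum
  rw [Hent, neg_nonneg]
  exact Finset.sum_nonpos fun w _ =>
    mul_nonpos_of_nonneg_of_nonpos (hp w) (logb_nonpos one_lt_two (hp w) (hp1 w))

theorem Hent_le [Nonempty W] (hp : ∀ w, 0 ≤ p w) (hsum : ∑ w, p w ≤ 1) :
    Hent p ≤ (log (Fintype.card W) + 1) / log 2 := by
  have hcard : (1 : ℝ) ≤ Fintype.card W := Nat.one_le_cast.2 Fintype.card_pos
  have hterm : ∀ w, p w * -log (p w) ≤ p w * log (Fintype.card W) + (Fintype.card W : ℝ)⁻¹ := by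
    intro w
    rcases (hp w).eq_or_lt with hw | hw
    · simp [← hw]
    have hlog := log_le_sub_one_of_pos (x := (Fintype.card W * p w)⁻¹) (by positivity)
    rw [log_inv, log_mul (by positivity) hw.ne'] at hlog
    calc p w * -log (p w)
        ≤ p w * (log (Fintype.card W) + (Fintype.card W * p w)⁻¹) := by gcongr; linarith
      _ = p w * log (Fintype.card W) + (Fintype.card W : ℝ)⁻¹ := by field_simp
  calc Hent p = (∑ w, p w * -log (p w)) / log 2 := by
        simp only [Hent, logb, Finset.sum_div, ← Finset.sum_neg_distrib]
        exact Finset.sum_congr rfl fun w _ => by ring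
    _ ≤ (∑ w, (p w * log (Fintype.card W) + (Fintype.card W : ℝ)⁻¹)) / log 2 := by
        gcongr with w
        exact hterm w
    _ ≤ (log (Fintype.card W) + 1) / log 2 := by
        rw [Finset.sum_add_distrib, ← Finset.sum_mul]
        have hlog := mul_le_of_le_one_left (log_nonneg hcard) hsum
        gcongr
        simp

theorem mul_le_Hent_of_sum_filter_le (hp : ∀ w, 0 ≤ p w) (hsum : ∑ w, p w = 1) {t γ : ℝ}
    (ht : 0 ≤ t) (hγ : ∑ w with 2 ^ (-t) < p w, p w ≤ γ) : (1 - γ) * t ≤ Hent p := by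
  have hp1 : ∀ w, p w ≤ 1 := fun w =>
    (Finset.single_le_sum (fun v _ => hp v) (Finset.mem_univ w)).trans_eq hsum
  have hlight : 1 - γ ≤ ∑ w with ¬ 2 ^ (-t) < p w, p w := by
    rw [← Finset.sum_filter_add_sum_filter_not _ fun w => 2 ^ (-t) < p w] at hsum
    linarith
  have hterm : ∀ w, ¬ 2 ^ (-t) < p w → p w * t ≤ p w * -logb 2 (p w) := by
    intro w hw
    rcases (hp w).eq_or_lt with h0 | h0
    · simp [← h0]
    · exact mul_le_mul_of_nonneg_left
        (le_neg.2 ((logb_le_iff_le_rpow one_lt_two h0).2 (not_lt.1 hw))) h0.le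
  calc (1 - γ) * t ≤ (∑ w with ¬ 2 ^ (-t) < p w, p w) * t := by gcongr
    _ = ∑ w with ¬ 2 ^ (-t) < p w, p w * t := Finset.sum_mul _ _ _
    _ ≤ ∑ w with ¬ 2 ^ (-t) < p w, p w * -logb 2 (p w) :=
        Finset.sum_le_sum fun w hw => hterm w (Finset.mem_filter.1 hw).2
    _ ≤ ∑ w, p w * -logb 2 (p w) :=
        Finset.sum_le_sum_of_subset_of_nonneg (Finset.filter_subset _ _) fun w _ _ =>
          mul_nonneg (hp w) (neg_nonneg.2 (logb_nonpos one_lt_two (hp w) (hp1 w)))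
    _ = Hent p := by simp only [Hent, mul_neg, Finset.sum_neg_distrib]

theorem card_filter_lt_le_rpow (hp : ∀ w, 0 ≤ p w) (hsum : ∑ w, p w ≤ 1) (t : ℝ) :
    (Finset.card {w | 2 ^ (-t) < p w} : ℝ) ≤ 2 ^ t := by
  have hcard : (Finset.card {w | 2 ^ (-t) < p w} : ℝ) * 2 ^ (-t) ≤ 1 := by
    rw [← nsmul_eq_mul]
    refine (Finset.card_nsmul_le_sum _ p _ fun w hw => (Finset.mem_filter.1 hw).2.le).trans ?_
    exact (Finset.sum_le_sum_of_subset_of_nonneg (Finset.subset_univ _) fun w _ _ => hp w).trans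
      hsum
  rwa [← le_div_iff₀ (by positivity), one_div, ← rpow_neg zero_le_two, neg_neg] at hcard

end Entropy

section EmpiricalDistribution

variable {A : Type*} [DecidableEq A] (k n : ℕ) (ω : ℤ → A)

theorem empDist_nonneg (w : Fin k → A) : 0 ≤ empDist k n ω w := by
  unfold empDist
  positivity

theorem sum_empDist (B : Finset (Fin k → A)) :
    ∑ w ∈ B, empDist k n ω w =
      (Finset.card {i : Fin (n / k) | blk (i * k) k ω ∈ B} : ℝ) / (n / k : ℕ) := by
  simp only [empDist, ← Finset.sum_div]
  rw [Finset.sum_comm, Finset.sum_range, Finset.card_filter]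
  simp

variable [Fintype A]

theorem sum_empDist_univ : ∑ w, empDist k n ω w = (n / k : ℕ) / (n / k : ℕ) := by
  simp [sum_empDist]

theorem sum_empDist_univ_le_one : ∑ w, empDist k n ω w ≤ 1 :=
  (sum_empDist_univ k n ω).trans_le (div_self_le_one _)

theorem plugIn_div_nonneg : 0 ≤ plugIn k n ω / k :=
  div_nonneg (Hent_nonneg (empDist_nonneg k n ω) (sum_empDist_univ_le_one k n ω)) k.cast_nonneg

theorem plugIn_div_le : plugIn k n ω / k ≤ (log (Fintype.card A) + 1) / log 2 := by
  have : Nonempty A := ⟨ω 0⟩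
  refine div_le_of_le_mul₀ k.cast_nonneg
    (div_nonneg (add_nonneg (log_natCast_nonneg _) zero_le_one) (log_nonneg one_le_two)) ?_
  rcases k.eq_zero_or_pos with rfl | hk
  · simp [plugIn, empDist, Hent]
  refine (Hent_le (empDist_nonneg k n ω) (sum_empDist_univ_le_one k n ω)).trans ?_
  have hk1 : (1 : ℝ) ≤ k := Nat.one_le_cast.2 hk
  rw [Fintype.card_fun, Fintype.card_fin, Nat.cast_pow, log_pow, div_mul_eq_mul_div]
  gcongr
  linarith

variable {k n ω}

theorem mul_le_plugIn {t γ : ℝ} (ht : 0 ≤ t) (hn : 0 < n / k)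
    (hγ : ∀ B : Finset (Fin k → A), (B.card : ℝ) ≤ 2 ^ t →
      (Finset.card {i : Fin (n / k) | blk (i * k) k ω ∈ B} : ℝ) ≤ γ * (n / k : ℕ)) :
    (1 - γ) * t ≤ plugIn k n ω := by
  have hn' : (0 : ℝ) < (n / k : ℕ) := Nat.cast_pos.2 hn
  refine mul_le_Hent_of_sum_filter_le (empDist_nonneg k n ω)
    ((sum_empDist_univ k n ω).trans (div_self hn'.ne')) ht ?_
  rw [sum_empDist, div_le_iff₀ hn']
  exact hγ _ (card_filter_lt_le_rpow (empDist_nonneg k n ω) (sum_empDist_univ_le_one k n ω) t)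

end EmpiricalDistribution

section FrequentBlocks

variable {A : Type*}

/-- The first `M` nonoverlapping `k`-blocks of a sequence. -/
def blocks (k M : ℕ) (ω : ℤ → A) (i : Fin M) : Fin k → A := blk (i * k) k ω

theorem blk_zero_mul_apply (k M : ℕ) (ω : ℤ → A) (i : Fin (M * k)) :
    blk 0 (M * k) ω i = blocks k M ω i.divNat i.modNat := by
  have hi : ((i : ℕ) : ℤ) = (i.divNat : ℕ) * k + (i.modNat : ℕ) := by
    exact_mod_cast (Nat.div_add_mod' i k).symm
  simp only [blocks, blk, hi]
  congr 1
  push_cast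
  ring

theorem card_fun_pow_mul_le [Fintype A] [Nonempty A] (k M β l : ℕ) {t : ℝ} (hβ : β ≤ (2 : ℝ) ^ t) :
    (Fintype.card (Fin k → A) : ℝ) ^ β * 2 ^ M * β ^ l ≤
      2 ^ (k * 2 ^ t * logb 2 (Fintype.card A) + M + l * t) := by
  have hcard : (1 : ℝ) ≤ Fintype.card A := Nat.one_le_cast.2 Fintype.card_pos
  have hdict : (Fintype.card (Fin k → A) : ℝ) ^ β ≤ 2 ^ (k * 2 ^ t * logb 2 (Fintype.card A)) := by
    rw [mul_comm _ (logb _ _), rpow_mul zero_le_two, rpow_logb two_pos one_lt_two.ne'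
      (by positivity), Fintype.card_fun, Fintype.card_fin, Nat.cast_pow, ← pow_mul,
      ← rpow_natCast, Nat.cast_mul]
    gcongr
  rw [rpow_add two_pos, rpow_add two_pos, rpow_natCast, mul_comm (l : ℝ), rpow_mul_natCast
    zero_le_two]
  gcongr

variable [MeasurableSpace A] {μ : Measure (ℤ → A)}

theorem measurable_blocks (k M : ℕ) : Measurable (blocks k M : (ℤ → A) → _) :=
  measurable_pi_iff.2 fun _ => measurable_blk _ _

theorem measureReal_preimage_blocks_le [IsFiniteMeasure μ] (k M : ℕ) (ω : ℤ → A) :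
    μ.real (blocks k M ⁻¹' {blocks k M ω}) ≤ pblock μ (M * k) (blk 0 (M * k) ω) := by
  refine measureReal_mono fun ω' hω' => funext fun i => ?_
  simp only [blk_zero_mul_apply]
  exact congrFun (congrFun hω' i.divNat) i.modNat

variable [Fintype A] [DecidableEq A] [MeasurableSingletonClass A] [IsProbabilityMeasure μ]

theorem ae_eventually_codeWeight_blocks_lt (hμ : Ergodic shift μ) {h c : ℝ}
    (hrate : Tendsto (fun k => Hblock μ k / k) atTop (nhds h)) (hc : c < h) {M : ℕ → ℕ}
    (hM : ∀ᶠ k in atTop, 0 < M k) (m : ℕ) (β : ℕ → ℕ) :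
    ∀ᵐ ω ∂μ, ∀ᶠ k : ℕ in atTop,
      codeWeight (markovWeight μ m k) (β k) (M k) (blocks k (M k) ω) <
        (2 : ℝ) ^ (k - M k * (k * c)) := by
  have hMk : Tendsto (fun k => M k * k) atTop atTop :=
    tendsto_atTop_mono' atTop (hM.mono fun k hk => Nat.le_mul_of_pos_left k hk) tendsto_id
  filter_upwards [ae_eventually_pblock_blk_le hμ hrate hc,
    ae_eventually_weight_lt (fun k => measurable_blocks k (M k))
      (Q := fun k => codeWeight (markovWeight μ m k) (β k) (M k))
      (fun k x => codeWeight_nonneg (markovWeight_nonneg m k) x)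
      (fun k => sum_codeWeight_le_one (markovWeight_nonneg m k)
        (sum_markovWeight_le_one hμ.toMeasurePreserving m k)) one_lt_two] with ω hsmb hbarron
  filter_upwards [hMk.eventually hsmb, hbarron] with k hsmb hbarron
  refine hbarron.trans_le ?_
  rw [sub_eq_add_neg, rpow_add two_pos, rpow_natCast, ← mul_assoc, ← Nat.cast_mul]
  gcongr
  exact (measureReal_preimage_blocks_le k (M k) ω).trans hsmb

theorem ae_eventually_card_mul_lt (hμ : Ergodic shift μ) {h c δ : ℝ}
    (hrate : Tendsto (fun k => Hblock μ k / k) atTop (nhds h)) (hc : 0 ≤ c) (hδ : 0 < δ)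
    {M : ℕ → ℕ} (hM : ∀ᶠ k in atTop, 0 < M k) :
    ∀ᵐ ω ∂μ, ∀ᶠ k : ℕ in atTop, ∀ B : Finset (Fin k → A), (B.card : ℝ) ≤ 2 ^ (k * c) →
      (Finset.card {i | blocks k (M k) ω i ∈ B} : ℝ) * (k * (h - c + δ)) <
        k + M k + k * 2 ^ (k * c) * logb 2 (Fintype.card A) + M k * (k * (3 * δ)) := by
  obtain ⟨m, hm⟩ : ∃ m, Hblock μ (m + 1) - Hblock μ m < h + δ := by
    have hneg : Tendsto (fun k : ℕ => -Hblock μ k / k) atTop (nhds (-h)) := by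
      simpa only [neg_div] using hrate.neg
    obtain ⟨m, hm⟩ := (frequently_lt_sub_of_tendsto_div hneg (c := -(h + δ)) (by linarith)).exists
    exact ⟨m, by linarith⟩
  filter_upwards [ae_eventually_rpow_le_prod_markovWeight hμ m hδ,
    ae_eventually_codeWeight_blocks_lt hμ hrate (sub_lt_self h hδ) hM m
      fun k => ⌊(2 : ℝ) ^ (k * c)⌋₊] with ω hmarkov hcode
  filter_upwards [hmarkov, hcode, hM] with k hmarkov hcode hM B hB
  have : Nonempty A := ⟨ω 0⟩
  set I : Finset (Fin (M k)) := {i | blocks k (M k) ω i ∈ B}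
  set β := ⌊(2 : ℝ) ^ (k * c)⌋₊
  have hβ : (β : ℝ) ≤ 2 ^ (k * c) := Nat.floor_le (by positivity)
  have hβpos : 0 < β := Nat.floor_pos.2 (one_le_rpow one_le_two (by positivity))
  have hlt :=
    calc (2 : ℝ) ^ (-(Iᶜ.card * (k * (Hblock μ (m + 1) - Hblock μ m)) + M k * (k * δ))) /
          2 ^ (k * 2 ^ (k * c) * logb 2 (Fintype.card A) + M k + I.card * (k * c))
        ≤ (∏ i ∈ Iᶜ, markovWeight μ m k (blocks k (M k) ω i)) /
          ((Fintype.card (Fin k → A) : ℝ) ^ β * 2 ^ M k * β ^ I.card) :=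
          div_le_div₀ (Finset.prod_nonneg fun i _ => markovWeight_nonneg m k _)
            (hmarkov (M k) hM Iᶜ) (by positivity) (card_fun_pow_mul_le k (M k) β I.card hβ)
      _ ≤ codeWeight (markovWeight μ m k) β (M k) (blocks k (M k) ω) :=
          prod_div_le_codeWeight (markovWeight_nonneg m k) (Nat.le_floor hB) _
            fun i hi => (Finset.mem_filter.1 hi).2
      _ < 2 ^ (k - M k * (k * (h - δ))) := hcode
  rw [← rpow_sub two_pos, rpow_lt_rpow_left_iff one_lt_two] at hlt
  have hcard : (Iᶜ.card : ℝ) = M k - I.card := by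
    rw [Finset.card_compl, Nat.cast_sub I.card_le_univ, Fintype.card_fin]
  have hentropy : Iᶜ.card * (k * (Hblock μ (m + 1) - Hblock μ m)) ≤ Iᶜ.card * (k * (h + δ)) := by
    gcongr
  rw [hcard] at hlt hentropy
  linarith

theorem ae_eventually_card_le_mul (hμ : Ergodic shift μ) {h c γ : ℝ}
    (hrate : Tendsto (fun k => Hblock μ k / k) atTop (nhds h)) (hc : 0 ≤ c) (hch : c < h)
    (hγ : 0 < γ) {M : ℕ → ℕ} (hM : ∀ C : ℝ, ∀ᶠ k : ℕ in atTop, C * 2 ^ (k * c) ≤ M k) :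
    ∀ᵐ ω ∂μ, ∀ᶠ k : ℕ in atTop, ∀ B : Finset (Fin k → A), (B.card : ℝ) ≤ 2 ^ (k * c) →
      (Finset.card {i | blocks k (M k) ω i ∈ B} : ℝ) ≤ γ * M k := by
  set δ := γ * (h - c) / 4
  have hδ : 0 < δ := div_pos (mul_pos hγ (sub_pos.2 hch)) four_pos
  set D := logb 2 (Fintype.card A)
  have hD : 0 ≤ D := div_nonneg (log_natCast_nonneg _) (log_nonneg one_le_two)
  have hMpos : ∀ᶠ k in atTop, 0 < M k := by
    filter_upwards [hM 1] with k hk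
    exact Nat.cast_pos.1 (lt_of_lt_of_le (by positivity) hk)
  filter_upwards [ae_eventually_card_mul_lt hμ hrate hc hδ hMpos] with ω hcard
  filter_upwards [hcard, hM ((1 + D) / (δ / 2)), eventually_gt_atTop 0,
    (tendsto_natCast_atTop_atTop.atTop_mul_const (half_pos hδ)).eventually_ge_atTop 1]
    with k hcard hM hk hkδ B hB
  have hk' : (0 : ℝ) < k := Nat.cast_pos.2 hk
  have hone : (1 : ℝ) ≤ 2 ^ (k * c) := one_le_rpow one_le_two (by positivity)
  have hdict : k + k * 2 ^ (k * c) * D ≤ M k * (k * (δ / 2)) := by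
    rw [div_mul_eq_mul_div, div_le_iff₀ (half_pos hδ)] at hM
    calc k + k * 2 ^ (k * c) * D ≤ k * 2 ^ (k * c) + k * 2 ^ (k * c) * D := by
          gcongr
          exact le_mul_of_one_le_right hk'.le hone
      _ = k * ((1 + D) * 2 ^ (k * c)) := by ring
      _ ≤ k * (M k * (δ / 2)) := by gcongr
      _ = M k * (k * (δ / 2)) := by ring
  have hflags : (M k : ℝ) ≤ M k * (k * (δ / 2)) := le_mul_of_one_le_right (Nat.cast_nonneg _) hkδ
  refine le_of_mul_le_mul_right ?_ (mul_pos hk' (sub_pos.2 hch))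
  calc _ ≤ (Finset.card {i | blocks k (M k) ω i ∈ B} : ℝ) * (k * (h - c + δ)) := by
        gcongr
        exact le_add_of_nonneg_right hδ.le
    _ ≤ k + M k + k * 2 ^ (k * c) * D + M k * (k * (3 * δ)) := (hcard B hB).le
    _ ≤ M k * (k * (4 * δ)) := by linarith
    _ = γ * M k * (k * (h - c)) := by ring

end FrequentBlocks

section GrowthRate

theorem eventually_mul_rpow_le_div {n : ℕ → ℕ} {c r : ℝ}
    (hn : ∀ᶠ k : ℕ in atTop, (2 : ℝ) ^ (k * r) ≤ n k) (hc : 0 ≤ c) (hcr : c < r) (C : ℝ) :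
    ∀ᶠ k : ℕ in atTop, C * 2 ^ (k * c) ≤ (n k / k : ℕ) := by
  have hlim : Tendsto (fun k : ℕ => (k : ℝ) ^ 1 / ((2 : ℝ) ^ (r - c)) ^ k * (C + 1)) atTop
      (nhds (0 * (C + 1))) :=
    (tendsto_pow_const_div_const_pow_of_one_lt 1
      (one_lt_rpow one_lt_two (sub_pos.2 hcr))).mul_const (C + 1)
  rw [zero_mul] at hlim
  filter_upwards [hn, hlim.eventually_le_const one_pos, eventually_gt_atTop 0]
    with k hn hgrowth hk
  have hk' : (0 : ℝ) < k := Nat.cast_pos.2 hk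
  have hone : (1 : ℝ) ≤ 2 ^ (k * c) := one_le_rpow one_le_two (by positivity)
  rw [pow_one, div_mul_eq_mul_div, div_le_one (by positivity), ← rpow_mul_natCast zero_le_two,
    mul_comm (r - c)] at hgrowth
  have hdiv : (n k : ℝ) / k < (n k / k : ℕ) + 1 := Nat.floor_div_eq_div (K := ℝ) (n k) k ▸
    Nat.lt_floor_add_one _
  have hratio : (C + 1) * 2 ^ (k * c) ≤ n k / k := by
    rw [le_div_iff₀ hk']
    calc (C + 1) * 2 ^ (k * c) * k = k * (C + 1) * 2 ^ (k * c) := by ring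
      _ ≤ 2 ^ (k * (r - c)) * 2 ^ (k * c) := by gcongr
      _ = 2 ^ (k * r) := by rw [← rpow_add two_pos]; ring_nf
      _ ≤ n k := hn
  linarith

end GrowthRate

section PlugInRate

variable {A : Type*} [Fintype A] [DecidableEq A] [MeasurableSpace A] [MeasurableSingletonClass A]
  {μ : Measure (ℤ → A)} [IsProbabilityMeasure μ]

theorem ae_eventually_le_plugIn_div (hμ : Ergodic shift μ) {h r c : ℝ}
    (hrate : Tendsto (fun k => Hblock μ k / k) atTop (nhds h)) {n : ℕ → ℕ}
    (hn : ∀ᶠ k : ℕ in atTop, (2 : ℝ) ^ (k * r) ≤ n k) (hc : c < min h r) :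
    ∀ᵐ ω ∂μ, ∀ᶠ k : ℕ in atTop, c ≤ plugIn k (n k) ω / k := by
  rcases le_or_gt c 0 with hc0 | hc0
  · exact .of_forall fun ω => .of_forall fun k => hc0.trans (plugIn_div_nonneg k (n k) ω)
  obtain ⟨d, hcd, hd⟩ := exists_between hc
  obtain ⟨hdh, hdr⟩ := lt_min_iff.1 hd
  have hd0 : 0 < d := hc0.trans hcd
  have hgrowth := eventually_mul_rpow_le_div hn hd0.le hdr
  filter_upwards [ae_eventually_card_le_mul hμ hrate hd0.le hdh
    (sub_pos.2 ((div_lt_one hd0).2 hcd)) hgrowth] with ω hcard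
  filter_upwards [hcard, hgrowth 1, eventually_gt_atTop 0] with k hcard hgrowth hk
  have hblocks : 0 < n k / k := Nat.cast_pos.1 (lt_of_lt_of_le (by positivity) hgrowth)
  have hk' : (0 : ℝ) < k := Nat.cast_pos.2 hk
  rw [le_div_iff₀ hk']
  calc c * k = (1 - (1 - c / d)) * (k * d) := by field_simp; ring
    _ ≤ plugIn k (n k) ω := mul_le_plugIn (by positivity) hblocks hcard

theorem plugIn_rate_liminf_ge_ae_general (hμ : Ergodic shift μ) {h r : ℝ}
    (hrate : Tendsto (fun k => Hblock μ k / k) atTop (nhds h)) {n : ℕ → ℕ}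
    (hn : ∀ᶠ k : ℕ in atTop, (2 : ℝ) ^ (k * r) ≤ n k) :
    ∀ᵐ ω ∂μ, min h r ≤ liminf (fun k => plugIn k (n k) ω / k) atTop := by
  have hrational : ∀ᵐ ω ∂μ, ∀ c : ℚ, (c : ℝ) < min h r →
      ∀ᶠ k : ℕ in atTop, c ≤ plugIn k (n k) ω / k :=
    ae_all_iff.2 fun _ => eventually_imp_distrib_left.2 fun hc =>
      ae_eventually_le_plugIn_div hμ hrate hn hc
  filter_upwards [hrational] with ω hω
  refine le_of_forall_rat_lt_imp_le fun c hc => ?_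
  have hbdd : IsBoundedUnder (· ≤ ·) atTop fun k : ℕ => plugIn k (n k) ω / k :=
    isBoundedUnder_of ⟨_, fun k => plugIn_div_le k (n k) ω⟩
  exact le_liminf_of_le hbdd.isCoboundedUnder_ge (hω c hc)

end PlugInRate

/-- For a stationary ergodic process with entropy rate `h`, any `ε > 0` and
sample sizes `n(k) ≥ 2^{k(h+ε)}`, almost surely
`liminf_{k→∞} H(k, X_1^{n(k)})/k ≥ h`. -/
theorem plugIn_rate_liminf_ge_ae
    {μ : Measure (ℤ → 𝕏)} [IsProbabilityMeasure μ]
    (herg : Ergodic shift μ) (h : ℝ)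
    (hrate : Tendsto (fun k => Hblock μ k / k) atTop (nhds h))
    (ε : ℝ) (hε : 0 < ε) (n : ℕ → ℕ)
    (hn : ∀ k : ℕ, (2 : ℝ) ^ ((k : ℝ) * (h + ε)) ≤ (n k : ℝ)) :
    ∀ᵐ ω ∂μ, h ≤ Filter.liminf (fun k => plugIn k (n k) ω / k) atTop := by
  simpa [hε.le] using
    plugIn_rate_liminf_ge_ae_general herg hrate (r := h + ε) (.of_forall hn)
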